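/- Let n ≥ 2 and let W be a normalized double-well potential. There exists a universal constant ℓ₀ > 0 and, for every K > 0, constants ε₁ > 0 and C depending only on n, W and K, with the following property. If ε < ε₁, v ∈ C²(ℝⁿ;[0,1]) is radial decreasing with ∫_{ℝⁿ}V(v) dx = 1 and AC_ε(v) ≤ 2 n ω_n^{1/n} + ℓ₀, and v satisfies −2 ε² Δv = ε v (1−v) E − W'(v) on ℝⁿ for some continuous radial function E with sup_{ℝⁿ}|E| ≤ K, then v(x) = z_ε(x) + f((|x|−R₀)/ε) for every x ∈ ℝⁿ, where f ∈ C²((−R₀/ε, ∞)) satisfies |f(s)| ≤ C ε e^{−|s|/C} for all s > −R₀/ε. -/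

import Mathlib

noncomputable section

open MeasureTheory Real Set Filter

abbrev En (n : ℕ) : Type := EuclideanSpace ℝ (Fin n)

/-- Volume of the unit ball of `ℝⁿ`. -/
def ballVol (n : ℕ) : ℝ := (volume (Metric.ball (0 : En n) 1)).toReal

/-- A normalized double-well potential. -/
structure DoubleWell (W : ℝ → ℝ) : Prop where
  contDiffOn : ContDiffOn ℝ 2 W (Icc 0 1)
  lipschitzSecond : ∃ L : NNReal, LipschitzOnWith L (iteratedDerivWithin 2 W (Icc 0 1)) (Icc 0 1)
  zero_at_zero : W 0 = 0
  zero_at_one : W 1 = 0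
  pos_on : ∀ t ∈ Ioo (0:ℝ) 1, 0 < W t
  second_pos_zero : 0 < iteratedDerivWithin 2 W (Icc 0 1) 0
  second_pos_one : 0 < iteratedDerivWithin 2 W (Icc 0 1) 1
  normalized : ∫ t in (0:ℝ)..1, Real.sqrt (W t) = 1

/-- `Φ(t) = ∫₀ᵗ √W`. -/
def Phi (W : ℝ → ℝ) (t : ℝ) : ℝ := ∫ s in (0:ℝ)..t, Real.sqrt (W s)

/-- `V(t) = Φ(t)^{n/(n-1)}`. -/
def Vpot (n : ℕ) (W : ℝ → ℝ) (t : ℝ) : ℝ := Phi W t ^ ((n : ℝ) / ((n : ℝ) - 1))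

/-- Membership in `H¹(ℝⁿ;[0,1])`. -/
structure H1Box (n : ℕ) (u : En n → ℝ) : Prop where
  mem_Icc : ∀ x, u x ∈ Icc (0:ℝ) 1
  diff : Differentiable ℝ u
  memL2 : MemLp u 2 (volume : Measure (En n))
  grad_memL2 : MemLp (fun x => fderiv ℝ u x) 2 (volume : Measure (En n))

/-- The Allen–Cahn energy. -/
def AC (n : ℕ) (W : ℝ → ℝ) (σ : ℝ) (u : En n → ℝ) : ℝ :=
  σ * (∫ x : En n, ‖fderiv ℝ u x‖ ^ 2) + σ⁻¹ * (∫ x : En n, W (u x))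

/-- The isoperimetric-type infimum `Ψ(σ,m)`. -/
def Psi (n : ℕ) (W : ℝ → ℝ) (σ m : ℝ) : ℝ :=
  sInf ((fun u => AC n W σ u) ''
    {u : En n → ℝ | H1Box n u ∧ (∫ x : En n, Vpot n W (u x)) = m})

/-- `u` is a minimizer of `ψ(ε) = Ψ(ε,1)`. -/
def Minimizes (n : ℕ) (W : ℝ → ℝ) (ε : ℝ) (u : En n → ℝ) : Prop :=
  H1Box n u ∧ (∫ x : En n, Vpot n W (u x)) = 1 ∧ AC n W ε u = Psi n W ε 1

/-- Radial function. -/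
def Radial (n : ℕ) (u : En n → ℝ) : Prop :=
  ∃ ζ : ℝ → ℝ, ∀ x : En n, u x = ζ ‖x‖

/-- Radial decreasing function. -/
def RadialDecreasing (n : ℕ) (u : En n → ℝ) : Prop :=
  ∃ ζ : ℝ → ℝ, AntitoneOn ζ (Ici 0) ∧ ∀ x : En n, u x = ζ ‖x‖

/-- The Laplacian as the trace of the second derivative. -/
def lap (n : ℕ) (u : En n → ℝ) (x : En n) : ℝ :=
  ∑ i : Fin n,
    fderiv ℝ (fun y => fderiv ℝ u y (EuclideanSpace.single i 1)) x (EuclideanSpace.single i 1)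

/-- The optimal transition profile `η`. -/
structure TransitionProfile (W : ℝ → ℝ) (η : ℝ → ℝ) : Prop where
  mem : ∀ s, η s ∈ Ioo (0:ℝ) 1
  init : η 0 = 1/2
  ode : ∀ s, HasDerivAt η (-(Real.sqrt (W (η s)))) s
  anti : StrictAnti η
  tendsto_bot : Tendsto η atBot (nhds 1)
  tendsto_top : Tendsto η atTop (nhds 0)

/-- `d_Φ(u,v)`. -/
def dPhi (n : ℕ) (W : ℝ → ℝ) (u v : En n → ℝ) : ℝ :=
  ∫ x : En n, |Phi W (u x) - Phi W (v x)| ^ ((n : ℝ) / ((n : ℝ) - 1))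

/-- `R₀ = ω_n^{-1/n}`. -/
def R0 (n : ℕ) : ℝ := ballVol n ^ (-(1:ℝ) / (n : ℝ))

/-!
In the variable `t = |x| / ε` the equation becomes `2 (g'' + (n - 1) / t * g') = W'(g)` up to an
error `O(ε) * g (1 - g)`. Where `t` is comparable to `R₀ / ε` the friction term is `O(ε) * |g'|` as
well, so the discrepancy `g' ^ 2 - W(g)` has derivative `O(ε) * |g'| * g (1 - g)` and is therefore
`O(ε) * W(g)`: integrate from `+∞` where `g` is small, and from the interior, where `1 - g` has
already decayed, where `g` is close to `1`. Hence the inverse profile composed with `g` has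
derivative `1 + O(ε)`, so `g` is an exponentially decaying `O(ε)` perturbation of a translate
of `η`. The mass constraint shared by `v` and `z_ε` determines the translation up to `O(ε)`.
-/

/-! ### Differential inequalities -/

lemma monotoneOn_of_hasDerivAt_nonneg {f f' : ℝ → ℝ} {S : Set ℝ} (hS : Convex ℝ S)
    (hf : ∀ x ∈ S, HasDerivAt f (f' x) x) (hf' : ∀ x ∈ interior S, 0 ≤ f' x) :
    MonotoneOn f S :=
  monotoneOn_of_hasDerivWithinAt_nonneg hS (fun x hx ↦ (hf x hx).continuousAt.continuousWithinAt)
    (fun x hx ↦ (hf x (interior_subset hx)).hasDerivWithinAt) hf'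

lemma antitoneOn_of_hasDerivAt_nonpos {f f' : ℝ → ℝ} {S : Set ℝ} (hS : Convex ℝ S)
    (hf : ∀ x ∈ S, HasDerivAt f (f' x) x) (hf' : ∀ x ∈ interior S, f' x ≤ 0) :
    AntitoneOn f S :=
  antitoneOn_of_hasDerivWithinAt_nonpos hS (fun x hx ↦ (hf x hx).continuousAt.continuousWithinAt)
    (fun x hx ↦ (hf x (interior_subset hx)).hasDerivWithinAt) hf'

lemma le_mul_exp_of_deriv_le_mul {f f' : ℝ → ℝ} {S : Set ℝ} {k s t : ℝ} (hS : Convex ℝ S)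
    (hf : ∀ x ∈ S, HasDerivAt f (f' x) x) (hle : ∀ x ∈ interior S, f' x ≤ k * f x)
    (hs : s ∈ S) (ht : t ∈ S) (hst : s ≤ t) : f t ≤ f s * exp (k * (t - s)) := by
  have hexp (x : ℝ) : HasDerivAt (fun x ↦ exp (-(k * x))) (exp (-(k * x)) * -k) x := by
    simpa using (((hasDerivAt_id x).const_mul k).neg).exp
  have hanti : AntitoneOn (fun x ↦ f x * exp (-(k * x))) S := by
    refine antitoneOn_of_hasDerivAt_nonpos hS (fun x hx ↦ (hf x hx).mul (hexp x)) fun x hx ↦ ?_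
    have := mul_le_mul_of_nonneg_right (hle x hx) (exp_pos (-(k * x))).le
    linarith
  calc f t = f t * exp (-(k * t)) * exp (k * t) := by rw [mul_assoc, ← exp_add]; simp
    _ ≤ f s * exp (-(k * s)) * exp (k * t) :=
        mul_le_mul_of_nonneg_right (hanti hs ht hst) (exp_pos _).le
    _ = f s * exp (k * (t - s)) := by rw [mul_assoc, ← exp_add]; ring_nf

lemma mul_exp_le_of_mul_le_deriv {f f' : ℝ → ℝ} {S : Set ℝ} {k s t : ℝ} (hS : Convex ℝ S)
    (hf : ∀ x ∈ S, HasDerivAt f (f' x) x) (hle : ∀ x ∈ interior S, k * f x ≤ f' x)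
    (hs : s ∈ S) (ht : t ∈ S) (hst : s ≤ t) : f s * exp (k * (t - s)) ≤ f t := by
  have := le_mul_exp_of_deriv_le_mul (f := fun x ↦ -f x) (k := k) hS (fun x hx ↦ (hf x hx).neg)
    (fun x hx ↦ by linarith [hle x hx]) hs ht hst
  linarith

lemma abs_sub_le_of_abs_deriv_le {f f' h h' : ℝ → ℝ} {S : Set ℝ} {s t : ℝ} (hS : Convex ℝ S)
    (hf : ∀ x ∈ S, HasDerivAt f (f' x) x) (hh : ∀ x ∈ S, HasDerivAt h (h' x) x)
    (hle : ∀ x ∈ interior S, |f' x| ≤ h' x) (hs : s ∈ S) (ht : t ∈ S) (hst : s ≤ t) :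
    |f t - f s| ≤ h t - h s := by
  have hsub : MonotoneOn (fun x ↦ h x - f x) S :=
    monotoneOn_of_hasDerivAt_nonneg hS (fun x hx ↦ (hh x hx).sub (hf x hx))
      fun x hx ↦ by linarith [(abs_le.1 (hle x hx)).2]
  have hadd : MonotoneOn (fun x ↦ h x + f x) S :=
    monotoneOn_of_hasDerivAt_nonneg hS (fun x hx ↦ (hh x hx).add (hf x hx))
      fun x hx ↦ by linarith [(abs_le.1 (hle x hx)).1]
  exact abs_le.2 ⟨by linarith [hadd hs ht hst], by linarith [hsub hs ht hst]⟩

lemma mul_le_and_half_mul_sq_le_of_le_second_deriv {f f₁ f₂ : ℝ → ℝ} {a k x : ℝ}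
    (h₁ : ∀ x ∈ Icc 0 a, HasDerivWithinAt f (f₁ x) (Icc 0 a) x)
    (h₂ : ∀ x ∈ Icc 0 a, HasDerivWithinAt f₁ (f₂ x) (Icc 0 a) x)
    (hf : 0 ≤ f 0) (hf₁ : 0 ≤ f₁ 0) (hk : ∀ x ∈ Icc 0 a, k ≤ f₂ x) (hx : x ∈ Icc 0 a) :
    k * x ≤ f₁ x ∧ k / 2 * x ^ 2 ≤ f x := by
  have mono {g g' : ℝ → ℝ} (hg : ∀ x ∈ Icc 0 a, HasDerivWithinAt g (g' x) (Icc 0 a) x)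
      (hg' : ∀ x ∈ Icc 0 a, 0 ≤ g' x) : MonotoneOn g (Icc 0 a) :=
    monotoneOn_of_hasDerivWithinAt_nonneg (convex_Icc _ _) (fun x hx ↦ (hg x hx).continuousWithinAt)
      (fun x hx ↦ (hg x (interior_subset hx)).mono interior_subset)
      fun x hx ↦ hg' x (interior_subset hx)
  have h0 : (0 : ℝ) ∈ Icc 0 a := ⟨le_rfl, hx.1.trans hx.2⟩
  have linear : ∀ x ∈ Icc 0 a, k * x ≤ f₁ x := fun x hx ↦ by
    have := mono (fun y hy ↦ (h₂ y hy).sub ((hasDerivWithinAt_id y _).const_mul k))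
      (fun y hy ↦ by linarith [hk y hy]) h0 hx hx.1
    simp only [Pi.sub_apply, id_eq] at this
    linarith
  refine ⟨linear x hx, ?_⟩
  have := mono (fun y hy ↦
    (h₁ y hy).sub (((hasDerivAt_pow 2 y).const_mul (k / 2)).hasDerivWithinAt))
    (fun y hy ↦ by norm_num; linarith [linear y hy]) h0 hx hx.1
  simp only [Pi.sub_apply] at this
  linarith

/-- Otherwise `√ζ` would reach zero in finite time. -/
lemma not_eventually_deriv_le_neg_mul_sqrt {ζ ζ' : ℝ → ℝ} {k : ℝ} (hk : 0 < k)
    (hpos : ∀ s, 0 < ζ s) (hζ : ∀ s, HasDerivAt ζ (ζ' s) s) :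
    ¬ ∀ᶠ s in atTop, ζ' s ≤ -(k * √(ζ s)) := by
  intro hev
  obtain ⟨S, hS⟩ := eventually_atTop.1 hev
  have hanti : AntitoneOn (fun s ↦ √(ζ s) + k / 2 * s) (Ici S) := by
    refine antitoneOn_of_hasDerivAt_nonpos (convex_Ici S)
      (fun s _ ↦ ((hζ s).sqrt (hpos s).ne').add ((hasDerivAt_id s).const_mul (k / 2)))
      fun s hs ↦ ?_
    have hle : ζ' s / (2 * √(ζ s)) ≤ -(k / 2) := by
      rw [div_le_iff₀ (by have := hpos s; positivity)]
      linarith [hS s (interior_subset hs)]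
    linarith
  have hle : S ≤ S + 2 / k * (√(ζ S) + 1) := by
    have : 0 ≤ 2 / k * (√(ζ S) + 1) := by positivity
    linarith
  have hdrop := hanti self_mem_Ici hle hle
  have heq : k / 2 * (S + 2 / k * (√(ζ S) + 1)) = k / 2 * S + (√(ζ S) + 1) := by field_simp
  have := Real.sqrt_nonneg (ζ (S + 2 / k * (√(ζ S) + 1)))
  simp only [heq] at hdrop
  linarith

/-! ### The potential -/

open scoped Pointwise in
lemma one_vadd_neg_Icc : (1 : ℝ) +ᵥ -Icc (0 : ℝ) 1 = Icc 0 1 := by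
  simp

lemma mapsTo_one_sub_Icc : MapsTo (fun x : ℝ ↦ 1 - x) (Icc 0 1) (Icc 0 1) :=
  fun _ hx ↦ ⟨by linarith [hx.2], by linarith [hx.1]⟩

namespace DoubleWell

variable {W : ℝ → ℝ}

lemma continuousOn (hW : DoubleWell W) : ContinuousOn W (Icc 0 1) :=
  hW.contDiffOn.continuousOn

lemma nonneg (hW : DoubleWell W) {x : ℝ} (hx : x ∈ Icc (0 : ℝ) 1) : 0 ≤ W x := by
  rcases hx.1.eq_or_lt with rfl | h0
  · exact hW.zero_at_zero.ge
  rcases hx.2.eq_or_lt with rfl | h1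
  · exact hW.zero_at_one.ge
  · exact (hW.pos_on x ⟨h0, h1⟩).le

lemma hasDerivWithinAt (hW : DoubleWell W) {x : ℝ} (hx : x ∈ Icc (0 : ℝ) 1) :
    HasDerivWithinAt W (derivWithin W (Icc 0 1) x) (Icc 0 1) x :=
  (hW.contDiffOn.differentiableOn (by norm_num) x hx).hasDerivWithinAt

lemma hasDerivAt (hW : DoubleWell W) {x : ℝ} (hx : x ∈ Ioo (0 : ℝ) 1) :
    HasDerivAt W (derivWithin W (Icc 0 1) x) x :=
  (hW.hasDerivWithinAt (Ioo_subset_Icc_self hx)).hasDerivAt (Icc_mem_nhds hx.1 hx.2)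

lemma contDiffOn_derivWithin (hW : DoubleWell W) :
    ContDiffOn ℝ 1 (derivWithin W (Icc 0 1)) (Icc 0 1) :=
  hW.contDiffOn.derivWithin (uniqueDiffOn_Icc zero_lt_one) (by norm_num)

lemma hasDerivWithinAt_derivWithin (hW : DoubleWell W) {x : ℝ} (hx : x ∈ Icc (0 : ℝ) 1) :
    HasDerivWithinAt (derivWithin W (Icc 0 1)) (iteratedDerivWithin 2 W (Icc 0 1) x)
      (Icc 0 1) x := by
  rw [iteratedDerivWithin_succ, iteratedDerivWithin_one]
  exact (hW.contDiffOn_derivWithin.differentiableOn one_ne_zero x hx).hasDerivWithinAt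

lemma continuousOn_secondDeriv (hW : DoubleWell W) :
    ContinuousOn (iteratedDerivWithin 2 W (Icc 0 1)) (Icc 0 1) :=
  hW.contDiffOn.continuousOn_iteratedDerivWithin le_rfl (uniqueDiffOn_Icc zero_lt_one)

lemma derivWithin_reflect (x : ℝ) :
    derivWithin (fun y ↦ W (1 - y)) (Icc 0 1) x = -derivWithin W (Icc 0 1) (1 - x) := by
  rw [derivWithin_comp_const_sub, one_vadd_neg_Icc]

lemma iteratedDerivWithin_two_reflect :
    iteratedDerivWithin 2 (fun y ↦ W (1 - y)) (Icc 0 1) =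
      fun x ↦ iteratedDerivWithin 2 W (Icc 0 1) (1 - x) := by
  rw [iteratedDerivWithin_comp_const_sub, one_vadd_neg_Icc]
  simp

lemma reflect (hW : DoubleWell W) : DoubleWell fun x ↦ W (1 - x) where
  contDiffOn := hW.contDiffOn.comp (by fun_prop) mapsTo_one_sub_Icc
  lipschitzSecond := by
    obtain ⟨L, hL⟩ := hW.lipschitzSecond
    rw [iteratedDerivWithin_two_reflect]
    exact ⟨L * 1, hL.comp (IsometryEquiv.subLeft 1).isometry.lipschitz.lipschitzOnWith
      mapsTo_one_sub_Icc⟩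
  zero_at_zero := by simpa using hW.zero_at_one
  zero_at_one := by simpa using hW.zero_at_zero
  pos_on t ht := hW.pos_on _ ⟨by linarith [ht.2], by linarith [ht.1]⟩
  second_pos_zero := by simpa [iteratedDerivWithin_two_reflect] using hW.second_pos_one
  second_pos_one := by simpa [iteratedDerivWithin_two_reflect] using hW.second_pos_zero
  normalized := by
    rw [intervalIntegral.integral_comp_sub_left (fun t ↦ √(W t)) 1]
    simpa using hW.normalized

lemma exists_abs_derivWithin_le_mul_self (hW : DoubleWell W)
    (hW0 : derivWithin W (Icc 0 1) 0 = 0) :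
    ∃ L > 0, ∀ x ∈ Icc (0 : ℝ) 1, |derivWithin W (Icc 0 1) x| ≤ L * x ∧ W x ≤ L * x ^ 2 := by
  obtain ⟨B, hB⟩ := isCompact_Icc.exists_bound_of_continuousOn hW.continuousOn_secondDeriv
  have hB0 : 0 ≤ B := (norm_nonneg _).trans (hB 0 (left_mem_Icc.2 zero_le_one))
  refine ⟨B + 1, by linarith, fun x hx ↦ ?_⟩
  have lower := (mul_le_and_half_mul_sq_le_of_le_second_deriv (k := -B)
    (fun y hy ↦ hW.hasDerivWithinAt hy) (fun y hy ↦ hW.hasDerivWithinAt_derivWithin hy)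
    hW.zero_at_zero.ge hW0.ge (fun y hy ↦ (abs_le.1 (hB y hy)).1) hx).1
  have upper := mul_le_and_half_mul_sq_le_of_le_second_deriv (k := -B)
    (fun y hy ↦ (hW.hasDerivWithinAt hy).neg)
    (fun y hy ↦ (hW.hasDerivWithinAt_derivWithin hy).neg)
    (by simp [hW.zero_at_zero]) (by simp [hW0])
    (fun y hy ↦ neg_le_neg (abs_le.1 (hB y hy)).2) hx
  simp only [Pi.neg_apply] at upper
  have hx0 := hx.1
  exact ⟨abs_le.2 ⟨by linarith, by linarith⟩, by nlinarith [sq_nonneg x]⟩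

lemma exists_mul_self_le_derivWithin (hW : DoubleWell W) (hW0 : derivWithin W (Icc 0 1) 0 = 0) :
    ∃ c > 0, ∃ δ > 0, δ < 1 / 2 ∧ ∀ x ∈ Icc 0 δ,
      c * x ≤ derivWithin W (Icc 0 1) x ∧ c * x ^ 2 ≤ W x := by
  have h0 : (0 : ℝ) ∈ Icc (0 : ℝ) 1 := left_mem_Icc.2 zero_le_one
  have hpos := hW.second_pos_zero
  set k := iteratedDerivWithin 2 W (Icc 0 1) 0
  have hev : ∀ᶠ x in nhdsWithin (0 : ℝ) (Icc 0 1),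
      k / 2 < iteratedDerivWithin 2 W (Icc 0 1) x :=
    (hW.continuousOn_secondDeriv 0 h0).eventually (lt_mem_nhds (by linarith))
  obtain ⟨r, hr, hball⟩ := Metric.mem_nhdsWithin_iff.1 hev
  have hδ1 : min (r / 2) (1 / 4) ≤ 1 / 4 := min_le_right _ _
  have hδr : min (r / 2) (1 / 4) ≤ r / 2 := min_le_left _ _
  have hsub : Icc 0 (min (r / 2) (1 / 4)) ⊆ Icc (0 : ℝ) 1 := Icc_subset_Icc_right (by linarith)
  refine ⟨k / 4, by linarith, min (r / 2) (1 / 4), by positivity, by linarith, fun x hx ↦ ?_⟩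
  have := mul_le_and_half_mul_sq_le_of_le_second_deriv (k := k / 2)
    (fun y hy ↦ (hW.hasDerivWithinAt (hsub hy)).mono hsub)
    (fun y hy ↦ (hW.hasDerivWithinAt_derivWithin (hsub hy)).mono hsub) hW.zero_at_zero.ge hW0.ge
    (fun y hy ↦ le_of_lt (hball ⟨by
      rw [mem_ball_zero_iff, Real.norm_of_nonneg hy.1]; linarith [hy.2], hsub hy⟩)) hx
  have hx0 := hx.1
  exact ⟨by nlinarith, by linarith⟩

end DoubleWell

namespace TransitionProfile

variable {W η : ℝ → ℝ}

lemma reflect (hη : TransitionProfile W η) :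
    TransitionProfile (fun x ↦ W (1 - x)) fun s ↦ 1 - η (-s) where
  mem s := ⟨by linarith [(hη.mem (-s)).2], by linarith [(hη.mem (-s)).1]⟩
  init := by norm_num [hη.init]
  ode s := by
    simpa using ((hη.ode (-s)).comp s (hasDerivAt_neg s)).const_sub 1
  anti s t hst := sub_lt_sub_left (hη.anti (neg_lt_neg hst)) 1
  tendsto_bot := by
    simpa using (hη.tendsto_top.comp tendsto_neg_atBot_atTop).const_sub 1
  tendsto_top := by
    simpa using (hη.tendsto_bot.comp tendsto_neg_atTop_atBot).const_sub 1

/-- If `W'(0)` were positive, then `√W(η) ≳ √η` and `η` would vanish in finite time. -/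
lemma derivWithin_zero_eq_zero (hW : DoubleWell W) (hη : TransitionProfile W η) :
    derivWithin W (Icc 0 1) 0 = 0 := by
  have hslope := hasDerivWithinAt_iff_tendsto_slope.1
    (hW.hasDerivWithinAt (left_mem_Icc.2 zero_le_one))
  set a := derivWithin W (Icc 0 1) 0
  have hη0 : Tendsto η atTop (nhdsWithin 0 (Icc 0 1 \ {0})) :=
    tendsto_nhdsWithin_iff.2 ⟨hη.tendsto_top, .of_forall fun s ↦
      ⟨Ioo_subset_Icc_self (hη.mem s), (hη.mem s).1.ne'⟩⟩
  have hlim : Tendsto (fun s ↦ W (η s) / η s) atTop (nhds a) := by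
    simpa [Function.comp_def, slope_def_field, hW.zero_at_zero] using hslope.comp hη0
  have ha : 0 ≤ a := ge_of_tendsto' hlim fun s ↦
    div_nonneg (hW.pos_on _ (hη.mem s)).le (hη.mem s).1.le
  by_contra hne
  have hapos : 0 < a := ha.lt_of_ne' hne
  refine not_eventually_deriv_le_neg_mul_sqrt (Real.sqrt_pos.2 (half_pos hapos))
    (fun s ↦ (hη.mem s).1) hη.ode ?_
  filter_upwards [hlim.eventually (lt_mem_nhds (half_lt_self hapos))] with s hs
  rw [← Real.sqrt_mul (half_pos hapos).le]
  exact neg_le_neg (Real.sqrt_le_sqrt ((lt_div_iff₀ (hη.mem s).1).1 hs).le)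

lemma derivWithin_one_eq_zero (hW : DoubleWell W) (hη : TransitionProfile W η) :
    derivWithin W (Icc 0 1) 1 = 0 := by
  simpa [DoubleWell.derivWithin_reflect] using hη.reflect.derivWithin_zero_eq_zero hW.reflect

end TransitionProfile

/-- Quantitative form of the double-well assumptions: `√W` is comparable to `x (1 - x)` with
constants `m` and `M`, `M` also controls `W'`, and `W'` is at most `-c (1 - x)` in a
`δ`-neighbourhood of the well `1`. -/
structure WellBounds (W : ℝ → ℝ) (m M c δ : ℝ) : Prop extends DoubleWell W where
  m_pos : 0 < m
  M_pos : 0 < M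
  c_pos : 0 < c
  δ_pos : 0 < δ
  δ_lt : δ < 1 / 2
  le_sqrt : ∀ x ∈ Icc (0 : ℝ) 1, m * (x * (1 - x)) ≤ √(W x)
  sqrt_le : ∀ x ∈ Icc (0 : ℝ) 1, √(W x) ≤ M * (x * (1 - x))
  abs_derivWithin_le : ∀ x ∈ Icc (0 : ℝ) 1, |derivWithin W (Icc 0 1) x| ≤ M * (x * (1 - x))
  le_neg_derivWithin : ∀ x ∈ Icc (1 - δ) 1, c * (1 - x) ≤ -derivWithin W (Icc 0 1) x

lemma self_mul_one_sub_nonneg {x : ℝ} (hx : x ∈ Icc (0 : ℝ) 1) : 0 ≤ x * (1 - x) :=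
  mul_nonneg hx.1 (sub_nonneg.2 hx.2)

lemma self_mul_one_sub_le_self {x : ℝ} (hx : x ∈ Icc (0 : ℝ) 1) : x * (1 - x) ≤ x :=
  mul_le_of_le_one_right hx.1 (by linarith [hx.1])

lemma self_mul_one_sub_le_one_sub {x : ℝ} (hx : x ∈ Icc (0 : ℝ) 1) : x * (1 - x) ≤ 1 - x :=
  mul_le_of_le_one_left (by linarith [hx.2]) hx.2

namespace DoubleWell

variable {W : ℝ → ℝ}

lemma exists_mul_sq_le (hW : DoubleWell W) (hW0 : derivWithin W (Icc 0 1) 0 = 0)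
    (hW1 : derivWithin W (Icc 0 1) 1 = 0) :
    ∃ k > 0, ∀ x ∈ Icc (0 : ℝ) 1, k * (x * (1 - x)) ^ 2 ≤ W x := by
  obtain ⟨c₀, hc₀, δ₀, hδ₀, hδ₀', near₀⟩ := hW.exists_mul_self_le_derivWithin hW0
  obtain ⟨c₁, hc₁, δ₁, hδ₁, hδ₁', near₁⟩ :=
    hW.reflect.exists_mul_self_le_derivWithin (by simp [derivWithin_reflect, hW1])
  obtain ⟨x₀, hx₀, hmin⟩ := (isCompact_Icc (a := δ₀) (b := 1 - δ₁)).exists_isMinOn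
    ⟨δ₀, le_rfl, by linarith⟩ (hW.continuousOn.mono (Icc_subset_Icc hδ₀.le (by linarith)))
  have hWx₀ : 0 < W x₀ := hW.pos_on x₀ ⟨by linarith [hx₀.1], by linarith [hx₀.2]⟩
  refine ⟨min (min c₀ c₁) (W x₀), by positivity, fun x hx ↦ ?_⟩
  have hnn := self_mul_one_sub_nonneg hx
  rcases le_total x δ₀ with hx0 | hx0
  · calc _ ≤ c₀ * x ^ 2 := by
          gcongr
          exacts [(min_le_left _ _).trans (min_le_left _ _), self_mul_one_sub_le_self hx]
      _ ≤ W x := (near₀ x ⟨hx.1, hx0⟩).2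
  rcases le_total (1 - δ₁) x with hx1 | hx1
  · calc _ ≤ c₁ * (1 - x) ^ 2 := by
          gcongr
          exacts [(min_le_left _ _).trans (min_le_right _ _), self_mul_one_sub_le_one_sub hx]
      _ ≤ W x := by simpa using (near₁ (1 - x) ⟨by linarith [hx.2], by linarith⟩).2
  · calc _ ≤ W x₀ * 1 ^ 2 := by
          gcongr
          exacts [min_le_right _ _, (self_mul_one_sub_le_self hx).trans hx.2]
      _ = W x₀ := by ring
      _ ≤ W x := hmin ⟨hx0, hx1⟩

lemma exists_le_mul_sq (hW : DoubleWell W) (hW0 : derivWithin W (Icc 0 1) 0 = 0)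
    (hW1 : derivWithin W (Icc 0 1) 1 = 0) :
    ∃ L > 0, ∀ x ∈ Icc (0 : ℝ) 1, |derivWithin W (Icc 0 1) x| ≤ L * (x * (1 - x)) ∧
      W x ≤ L * (x * (1 - x)) ^ 2 := by
  obtain ⟨L₀, hL₀, bound₀⟩ := hW.exists_abs_derivWithin_le_mul_self hW0
  obtain ⟨L₁, hL₁, bound₁⟩ :=
    hW.reflect.exists_abs_derivWithin_le_mul_self (by simp [derivWithin_reflect, hW1])
  have key {L y : ℝ} {A B : ℝ} (hL : 0 < L) (hL' : L ≤ L₀ + L₁) (hy : 0 ≤ y) {z : ℝ}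
      (hyz : y ≤ 2 * z) (h : A ≤ L * y ∧ B ≤ L * y ^ 2) :
      A ≤ 4 * (L₀ + L₁) * z ∧ B ≤ 4 * (L₀ + L₁) * z ^ 2 := by
    have hz : 0 ≤ z := by linarith
    constructor
    · calc A ≤ L * y := h.1
        _ ≤ (L₀ + L₁) * (2 * z) := by gcongr
        _ ≤ 4 * (L₀ + L₁) * z := by nlinarith
    · calc B ≤ L * y ^ 2 := h.2
        _ ≤ (L₀ + L₁) * (2 * z) ^ 2 := by gcongr
        _ = 4 * (L₀ + L₁) * z ^ 2 := by ring
  refine ⟨4 * (L₀ + L₁), by positivity, fun x hx ↦ ?_⟩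
  have hx1 : 0 ≤ 1 - x := by linarith [hx.2]
  rcases le_total x (1 / 2) with h | h
  · exact key hL₀ (by linarith) hx.1 (by nlinarith [hx.1]) (bound₀ x hx)
  · have := bound₁ (1 - x) (mapsTo_one_sub_Icc hx)
    simp only [derivWithin_reflect, abs_neg, sub_sub_cancel] at this
    exact key hL₁ (by linarith) hx1 (by nlinarith) this

lemma exists_wellBounds {η : ℝ → ℝ} (hW : DoubleWell W) (hη : TransitionProfile W η) :
    ∃ m M c δ : ℝ, WellBounds W m M c δ := by
  have hW0 := hη.derivWithin_zero_eq_zero hW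
  have hW1 := hη.derivWithin_one_eq_zero hW
  obtain ⟨k, hk, hlow⟩ := hW.exists_mul_sq_le hW0 hW1
  obtain ⟨L, hL, hup⟩ := hW.exists_le_mul_sq hW0 hW1
  obtain ⟨c, hc, δ, hδ, hδ', hnear⟩ :=
    hW.reflect.exists_mul_self_le_derivWithin (by simp [derivWithin_reflect, hW1])
  refine ⟨√k, L + √L, c, δ, { hW with
    m_pos := by positivity
    M_pos := by positivity
    c_pos := hc
    δ_pos := hδ
    δ_lt := hδ'
    le_sqrt := fun x hx ↦ Real.le_sqrt_of_sq_le ?_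
    sqrt_le := fun x hx ↦ ?_
    abs_derivWithin_le := fun x hx ↦ (hup x hx).1.trans ?_
    le_neg_derivWithin := fun x hx ↦ ?_ }⟩
  · rw [mul_pow, Real.sq_sqrt hk.le]
    exact hlow x hx
  · have hx0 := self_mul_one_sub_nonneg hx
    calc √(W x) ≤ √(L * (x * (1 - x)) ^ 2) := Real.sqrt_le_sqrt (hup x hx).2
      _ = √L * (x * (1 - x)) := by rw [Real.sqrt_mul hL.le, Real.sqrt_sq hx0]
      _ ≤ (L + √L) * (x * (1 - x)) := by gcongr; linarith
  · have hx0 := self_mul_one_sub_nonneg hx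
    gcongr
    linarith [Real.sqrt_nonneg L]
  · simpa [derivWithin_reflect] using (hnear (1 - x) ⟨by linarith [hx.2], by linarith [hx.1]⟩).1

end DoubleWell

section Potential

variable {W : ℝ → ℝ} {m M c δ x y : ℝ} {n : ℕ}

lemma DoubleWell.continuousOn_sqrt (hW : DoubleWell W) :
    ContinuousOn (fun s ↦ √(W s)) (Icc 0 1) :=
  Real.continuous_sqrt.comp_continuousOn hW.continuousOn

lemma WellBounds.sqrt_le_const (hw : WellBounds W m M c δ) (hx : x ∈ Icc (0 : ℝ) 1) :
    √(W x) ≤ M :=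
  (hw.sqrt_le x hx).trans (mul_le_of_le_one_right hw.M_pos.le
    ((self_mul_one_sub_le_self hx).trans hx.2))

lemma DoubleWell.phi_sub_phi (hW : DoubleWell W) (hx : x ∈ Icc (0 : ℝ) 1)
    (hy : y ∈ Icc (0 : ℝ) 1) : Phi W x - Phi W y = ∫ s in y..x, √(W s) := by
  have hint : ∀ z ∈ Icc (0 : ℝ) 1, IntervalIntegrable (fun s ↦ √(W s)) volume 0 z := fun z hz ↦
    (hW.continuousOn_sqrt.mono
      (by rw [uIcc_of_le hz.1]; exact Icc_subset_Icc_right hz.2)).intervalIntegrable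
  exact intervalIntegral.integral_interval_sub_left (hint x hx) (hint y hy)

lemma DoubleWell.monotoneOn_phi (hW : DoubleWell W) : MonotoneOn (Phi W) (Icc 0 1) := by
  intro y hy x hx hyx
  rw [← sub_nonneg, hW.phi_sub_phi hx hy]
  exact intervalIntegral.integral_nonneg hyx fun s _ ↦ Real.sqrt_nonneg _

lemma WellBounds.abs_phi_sub_phi_le (hw : WellBounds W m M c δ) (hx : x ∈ Icc (0 : ℝ) 1)
    (hy : y ∈ Icc (0 : ℝ) 1) : |Phi W x - Phi W y| ≤ M * |x - y| := by
  rw [hw.phi_sub_phi hx hy, ← Real.norm_eq_abs]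
  refine intervalIntegral.norm_integral_le_of_norm_le_const fun s hs ↦ ?_
  rw [Real.norm_of_nonneg (Real.sqrt_nonneg _)]
  exact hw.sqrt_le_const (uIcc_subset_Icc hy hx (uIoc_subset_uIcc hs))

lemma DoubleWell.hasDerivAt_phi (hW : DoubleWell W) (hx : x ∈ Ioo (0 : ℝ) 1) :
    HasDerivAt (Phi W) (√(W x)) x := by
  refine intervalIntegral.integral_hasDerivAt_right ?_ ?_
    (hW.continuousOn_sqrt.continuousAt (Icc_mem_nhds hx.1 hx.2))
  · refine ContinuousOn.intervalIntegrable (hW.continuousOn_sqrt.mono ?_)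
    rw [uIcc_of_le hx.1.le]
    exact Icc_subset_Icc_right hx.2.le
  · exact (hW.continuousOn_sqrt.mono Ioo_subset_Icc_self).stronglyMeasurableAtFilter
      isOpen_Ioo x hx

lemma DoubleWell.phi_mem_Icc (hW : DoubleWell W) (hx : x ∈ Icc (0 : ℝ) 1) :
    Phi W x ∈ Icc (0 : ℝ) 1 := by
  have h0 : Phi W 0 = 0 := by simp [Phi]
  have h1 : Phi W 1 = 1 := hW.normalized
  exact ⟨h0 ▸ hW.monotoneOn_phi (left_mem_Icc.2 zero_le_one) hx hx.1,
    h1 ▸ hW.monotoneOn_phi hx (right_mem_Icc.2 zero_le_one) hx.2⟩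

lemma DoubleWell.phi_pos (hW : DoubleWell W) (hx : x ∈ Ioo (0 : ℝ) 1) : 0 < Phi W x :=
  intervalIntegral.intervalIntegral_pos_of_pos_on
    (hW.continuousOn_sqrt.mono
      (by rw [uIcc_of_le hx.1.le]; exact Icc_subset_Icc_right hx.2.le)).intervalIntegrable
    (fun s hs ↦ Real.sqrt_pos.2 (hW.pos_on s ⟨hs.1, hs.2.trans hx.2⟩)) hx.1

lemma abs_rpow_sub_rpow_le {p : ℝ} (hp : 1 ≤ p) (hx : x ∈ Icc (0 : ℝ) 1)
    (hy : y ∈ Icc (0 : ℝ) 1) : |x ^ p - y ^ p| ≤ p * |x - y| := by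
  refine (convex_Icc (0 : ℝ) 1).norm_image_sub_le_of_norm_hasDerivWithin_le
    (fun z _ ↦ (Real.hasDerivAt_rpow_const (.inr hp)).hasDerivWithinAt) (fun z hz ↦ ?_) hy hx
  rw [norm_mul, Real.norm_of_nonneg (by linarith), Real.norm_of_nonneg (Real.rpow_nonneg hz.1 _)]
  exact mul_le_of_le_one_right (by linarith) (Real.rpow_le_one hz.1 hz.2 (by linarith))

lemma natCast_div_sub_one_mem_Icc (hn : 2 ≤ n) : (n : ℝ) / (n - 1) ∈ Icc (1 : ℝ) 2 := by
  have : (2 : ℝ) ≤ n := by exact_mod_cast hn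
  constructor
  · rw [le_div_iff₀] <;> linarith
  · rw [div_le_iff₀] <;> linarith

lemma vpot_zero (hn : 2 ≤ n) : Vpot n W 0 = 0 := by
  have := (natCast_div_sub_one_mem_Icc hn).1
  simp only [Vpot, Phi, intervalIntegral.integral_same]
  exact Real.zero_rpow (by linarith)

lemma DoubleWell.vpot_one (hW : DoubleWell W) : Vpot n W 1 = 1 := by
  rw [Vpot, Phi, hW.normalized, Real.one_rpow]

lemma DoubleWell.monotoneOn_vpot (hW : DoubleWell W) (hn : 2 ≤ n) :
    MonotoneOn (Vpot n W) (Icc 0 1) := fun _ hx _ hy hxy ↦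
  Real.rpow_le_rpow (hW.phi_mem_Icc hx).1 (hW.monotoneOn_phi hx hy hxy)
    (by linarith [(natCast_div_sub_one_mem_Icc hn).1])

lemma DoubleWell.vpot_mem_Icc (hW : DoubleWell W) (hn : 2 ≤ n) (hx : x ∈ Icc (0 : ℝ) 1) :
    Vpot n W x ∈ Icc (0 : ℝ) 1 :=
  have hΦ := hW.phi_mem_Icc hx
  ⟨Real.rpow_nonneg hΦ.1 _, Real.rpow_le_one hΦ.1 hΦ.2
    (by linarith [(natCast_div_sub_one_mem_Icc hn).1])⟩

lemma WellBounds.abs_vpot_sub_vpot_le (hw : WellBounds W m M c δ) (hn : 2 ≤ n)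
    (hx : x ∈ Icc (0 : ℝ) 1) (hy : y ∈ Icc (0 : ℝ) 1) :
    |Vpot n W x - Vpot n W y| ≤ 2 * M * |x - y| := by
  have hp := natCast_div_sub_one_mem_Icc hn
  calc |Vpot n W x - Vpot n W y| ≤ n / (n - 1) * |Phi W x - Phi W y| :=
        abs_rpow_sub_rpow_le hp.1 (hw.phi_mem_Icc hx) (hw.phi_mem_Icc hy)
    _ ≤ 2 * (M * |x - y|) := by
        gcongr
        exacts [hp.2, hw.abs_phi_sub_phi_le hx hy]
    _ = 2 * M * |x - y| := by ring

end Potential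

/-! ### The transition profile -/

lemma exp_neg_le_inv {x : ℝ} (hx : 0 < x) : exp (-x) ≤ x⁻¹ := by
  rw [exp_neg]
  gcongr
  linarith [add_one_le_exp x]

lemma mul_exp_neg_mul_le {b : ℝ} (hb : 0 < b) (x : ℝ) :
    x * exp (-(b * x)) ≤ 2 / b * exp (-(b / 2 * x)) := by
  have hx : x ≤ 2 / b * exp (b / 2 * x) := by
    rw [div_mul_eq_mul_div, le_div_iff₀ hb]
    linarith [add_one_le_exp (b / 2 * x)]
  calc x * exp (-(b * x)) ≤ 2 / b * exp (b / 2 * x) * exp (-(b * x)) := by gcongr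
    _ = 2 / b * exp (-(b / 2 * x)) := by rw [mul_assoc, ← exp_add]; ring_nf

/-- The inverse function of the transition profile, obtained by separating variables in
`η' = -√(W(η))`. -/
def profileInv (W : ℝ → ℝ) (x : ℝ) : ℝ := -∫ s in (1 / 2 : ℝ)..x, (√(W s))⁻¹

lemma DoubleWell.hasDerivAt_profileInv {W : ℝ → ℝ} {x : ℝ} (hW : DoubleWell W)
    (hx : x ∈ Ioo (0 : ℝ) 1) : HasDerivAt (profileInv W) (-(√(W x))⁻¹) x := by
  have hcont : ContinuousOn (fun s ↦ (√(W s))⁻¹) (Ioo 0 1) :=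
    (hW.continuousOn_sqrt.mono Ioo_subset_Icc_self).inv₀
      fun y hy ↦ (Real.sqrt_pos.2 (hW.pos_on y hy)).ne'
  refine (intervalIntegral.integral_hasDerivAt_right ?_
    (hcont.stronglyMeasurableAtFilter isOpen_Ioo x hx)
    (hcont.continuousAt (Ioo_mem_nhds hx.1 hx.2))).neg
  exact (hcont.mono (ordConnected_Ioo.uIcc_subset (by norm_num) hx)).intervalIntegrable

namespace TransitionProfile

variable {W η : ℝ → ℝ} {m M c δ x y z : ℝ} {n : ℕ}

lemma mem_Icc (hη : TransitionProfile W η) (y : ℝ) : η y ∈ Icc (0 : ℝ) 1 :=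
  Ioo_subset_Icc_self (hη.mem y)

lemma continuous (hη : TransitionProfile W η) : Continuous η :=
  continuous_iff_continuousAt.2 fun y ↦ (hη.ode y).continuousAt

lemma contDiff (hη : TransitionProfile W η) (hW : DoubleWell W) : ContDiff ℝ 2 η := by
  have hdiff : Differentiable ℝ η := fun s ↦ (hη.ode s).differentiableAt
  have hderiv : deriv η = fun s ↦ -√(W (η s)) := funext fun s ↦ (hη.ode s).deriv
  have bootstrap (k : WithTop ℕ∞) (hk : k ≤ 2) (h : ContDiff ℝ k η) : ContDiff ℝ k (deriv η) := by
    rw [hderiv, contDiff_iff_contDiffAt]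
    intro s
    have hWs : ContDiffAt ℝ k W (η s) :=
      (hW.contDiffOn.contDiffAt (Icc_mem_nhds (hη.mem s).1 (hη.mem s).2)).of_le hk
    exact ((hWs.comp s h.contDiffAt).sqrt (hW.pos_on _ (hη.mem s)).ne').neg
  have hC1 : ContDiff ℝ 1 η := contDiff_one_iff_deriv.2
    ⟨hdiff, (bootstrap 0 (by norm_num) (contDiff_zero.2 hη.continuous)).continuous⟩
  rw [show (2 : WithTop ℕ∞) = 1 + 1 by norm_num, contDiff_succ_iff_deriv]
  exact ⟨hdiff, by simp, bootstrap 1 (by norm_num) hC1⟩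

lemma profileInv_apply (hη : TransitionProfile W η) (hW : DoubleWell W) (y : ℝ) :
    profileInv W (η y) = y := by
  have hderiv (y : ℝ) : HasDerivAt (fun y ↦ profileInv W (η y) - y) 0 y := by
    have hne := (Real.sqrt_pos.2 (hW.pos_on _ (hη.mem y))).ne'
    simpa [hne] using! ((hW.hasDerivAt_profileInv (hη.mem y)).comp y (hη.ode y)).sub
      (hasDerivAt_id y)
  have hconst := is_const_of_deriv_eq_zero (fun y ↦ (hderiv y).differentiableAt)
    (fun y ↦ (hderiv y).deriv) y 0
  have hzero : profileInv W (η 0) = 0 := by simp [hη.init, profileInv]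
  linarith

lemma apply_profileInv (hη : TransitionProfile W η) (hW : DoubleWell W)
    (hx : x ∈ Ioo (0 : ℝ) 1) : η (profileInv W x) = x := by
  obtain ⟨a, ha⟩ := (hη.tendsto_bot.eventually (lt_mem_nhds hx.2)).exists
  obtain ⟨b, hb⟩ := (hη.tendsto_top.eventually (gt_mem_nhds hx.1)).exists
  obtain ⟨y, rfl⟩ := mem_range_of_exists_le_of_exists_ge hη.continuous ⟨b, hb.le⟩ ⟨a, ha.le⟩
  rw [hη.profileInv_apply hW]

/-- The odds ratio `η / (1 - η)` satisfies `f' ≤ -m f`. -/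
lemma le_exp_neg (hη : TransitionProfile W η)
    (hm : ∀ x ∈ Icc (0 : ℝ) 1, m * (x * (1 - x)) ≤ √(W x)) (hy : 0 ≤ y) :
    η y ≤ exp (-(m * y)) := by
  have hpos (s : ℝ) : 0 < 1 - η s := by linarith [(hη.mem s).2]
  have hodds := le_mul_exp_of_deriv_le_mul (f := fun s ↦ η s / (1 - η s)) (k := -m) convex_univ
    (fun s _ ↦ (hη.ode s).div ((hη.ode s).const_sub 1) (hpos s).ne') (fun s _ ↦ by
      have := hm _ (hη.mem_Icc s)
      have hs := hpos s
      rw [mul_div_assoc', div_le_div_iff₀ (by positivity) hs]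
      nlinarith) (mem_univ 0) (mem_univ y) hy
  calc η y ≤ η y / (1 - η y) := le_div_self (hη.mem y).1.le (hpos y) (by linarith [(hη.mem y).1])
    _ ≤ exp (-(m * y)) := by norm_num [hη.init] at hodds; exact hodds

lemma one_sub_le_exp (hη : TransitionProfile W η)
    (hm : ∀ x ∈ Icc (0 : ℝ) 1, m * (x * (1 - x)) ≤ √(W x)) (hy : y ≤ 0) :
    1 - η y ≤ exp (m * y) := by
  have hm' : ∀ x ∈ Icc (0 : ℝ) 1, m * (x * (1 - x)) ≤ √(W (1 - x)) := fun x hx ↦ by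
    simpa [mul_comm] using hm (1 - x) (mapsTo_one_sub_Icc hx)
  simpa using hη.reflect.le_exp_neg hm' (neg_nonneg.2 hy)

lemma self_mul_one_sub_le_exp (hη : TransitionProfile W η)
    (hm : ∀ x ∈ Icc (0 : ℝ) 1, m * (x * (1 - x)) ≤ √(W x)) (y : ℝ) :
    η y * (1 - η y) ≤ exp (-(m * |y|)) := by
  rcases le_total 0 y with hy | hy
  · rw [abs_of_nonneg hy]
    exact (self_mul_one_sub_le_self (hη.mem_Icc y)).trans (hη.le_exp_neg hm hy)
  · rw [abs_of_nonpos hy, mul_neg, neg_neg]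
    exact (self_mul_one_sub_le_one_sub (hη.mem_Icc y)).trans (hη.one_sub_le_exp hm hy)

lemma abs_sub_le_mul_exp (hη : TransitionProfile W η) (hw : WellBounds W m M c δ) {ℓ : ℝ}
    (hℓ : ∀ w ∈ uIcc y z, ℓ ≤ |w|) : |η z - η y| ≤ M * exp (-(m * ℓ)) * |z - y| := by
  refine (convex_uIcc y z).norm_image_sub_le_of_norm_hasDerivWithin_le
    (fun w _ ↦ (hη.ode w).hasDerivWithinAt) (fun w hw' ↦ ?_) left_mem_uIcc right_mem_uIcc
  have hm := hw.m_pos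
  have hM := hw.M_pos
  rw [norm_neg, Real.norm_of_nonneg (Real.sqrt_nonneg _)]
  calc √(W (η w)) ≤ M * (η w * (1 - η w)) := hw.sqrt_le _ (hη.mem_Icc w)
    _ ≤ M * exp (-(m * |w|)) := by gcongr; exact hη.self_mul_one_sub_le_exp hw.le_sqrt w
    _ ≤ M * exp (-(m * ℓ)) := by gcongr; exact hℓ w hw'

lemma abs_sub_le_of_abs_sub_le (hη : TransitionProfile W η) (hw : WellBounds W m M c δ) {κ : ℝ}
    (hκ : κ ≤ 1 / 2) (hyz : |z - y| ≤ κ * (1 + |y|)) :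
    |η z - η y| ≤ M * exp (m / 2) * (1 + 4 / m) * κ * exp (-(m / 4 * |y|)) := by
  have hm := hw.m_pos
  have hM := hw.M_pos
  have hy : 0 < 1 + |y| := by positivity
  have hκ0 : 0 ≤ κ := nonneg_of_mul_nonneg_left ((abs_nonneg _).trans hyz) hy
  have hfar : ∀ w ∈ uIcc y z, |y| / 2 - 1 / 2 ≤ |w| := fun w hw' ↦ by
    have hwy : |w - y| ≤ |z - y| := abs_sub_left_of_mem_uIcc hw'
    have htri : |y| ≤ |w| + |w - y| := by linarith [abs_sub_abs_le_abs_sub y w, abs_sub_comm w y]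
    nlinarith
  have hexp : exp (-(m * (|y| / 2 - 1 / 2))) = exp (m / 2) * exp (-(m / 2 * |y|)) := by
    rw [← exp_add]; ring_nf
  have hpoly : (1 + |y|) * exp (-(m / 2 * |y|)) ≤ (1 + 4 / m) * exp (-(m / 4 * |y|)) := by
    have hlin := mul_exp_neg_mul_le (half_pos hm) |y|
    have hconst : exp (-(m / 2 * |y|)) ≤ exp (-(m / 4 * |y|)) := by gcongr; norm_num
    have hrate : 2 / (m / 2) * exp (-(m / 2 / 2 * |y|)) = 4 / m * exp (-(m / 4 * |y|)) := by
      ring_nf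
    linarith
  calc |η z - η y| ≤ M * (exp (m / 2) * exp (-(m / 2 * |y|))) * |z - y| :=
        hexp ▸ hη.abs_sub_le_mul_exp hw hfar
    _ ≤ M * (exp (m / 2) * exp (-(m / 2 * |y|))) * (κ * (1 + |y|)) := by gcongr
    _ = M * exp (m / 2) * κ * ((1 + |y|) * exp (-(m / 2 * |y|))) := by ring
    _ ≤ M * exp (m / 2) * κ * ((1 + 4 / m) * exp (-(m / 4 * |y|))) := by gcongr
    _ = _ := by ring

lemma abs_vpot_sub_step_le (hη : TransitionProfile W η) (hw : WellBounds W m M c δ) (hn : 2 ≤ n)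
    (T t : ℝ) : |Vpot n W (η (t - T)) - (Iic T).indicator 1 t| ≤
      2 * M * exp (-(m * |t - T|)) := by
  have hM := hw.M_pos
  have hmem := hη.mem_Icc (t - T)
  rcases le_or_gt t T with h | h
  · have hlip := hw.abs_vpot_sub_vpot_le hn hmem (right_mem_Icc.2 zero_le_one)
    rw [hw.vpot_one, abs_sub_comm (η _), abs_of_nonneg (sub_nonneg.2 hmem.2)] at hlip
    rw [indicator_of_mem (mem_Iic.2 h), Pi.one_apply, abs_of_nonpos (sub_nonpos.2 h), mul_neg,
      neg_neg]
    exact hlip.trans (by gcongr; exact hη.one_sub_le_exp hw.le_sqrt (sub_nonpos.2 h))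
  · have hlip := hw.abs_vpot_sub_vpot_le hn hmem (left_mem_Icc.2 zero_le_one)
    rw [vpot_zero hn, sub_zero (η _), abs_of_nonneg hmem.1] at hlip
    rw [indicator_of_notMem (notMem_Iic.2 h), abs_of_pos (sub_pos.2 h)]
    exact hlip.trans (by gcongr; exact hη.le_exp_neg hw.le_sqrt (sub_pos.2 h).le)

lemma antitone_vpot (hη : TransitionProfile W η) (hW : DoubleWell W) (hn : 2 ≤ n) :
    Antitone fun y ↦ Vpot n W (η y) := fun _ _ h ↦
  hW.monotoneOn_vpot hn (hη.mem_Icc _) (hη.mem_Icc _) (hη.anti.antitone h)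

lemma exists_mul_sub_le_vpot_sub (hη : TransitionProfile W η) (hW : DoubleWell W) (hn : 2 ≤ n)
    (r : ℝ) : ∃ c₀ > 0, ∀ a b, -r ≤ a → a ≤ b → b ≤ r →
      c₀ * (b - a) ≤ Vpot n W (η a) - Vpot n W (η b) := by
  have hp := (natCast_div_sub_one_mem_Icc hn).1
  set p : ℝ := n / (n - 1)
  have hderiv (y : ℝ) : HasDerivAt (fun y ↦ Vpot n W (η y))
      (√(W (η y)) * -√(W (η y)) * p * Phi W (η y) ^ (p - 1)) y :=
    ((hW.hasDerivAt_phi (hη.mem y)).comp y (hη.ode y)).rpow_const (.inr hp)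
  have hsq (y : ℝ) : √(W (η y)) * √(W (η y)) = W (η y) :=
    Real.mul_self_sqrt (hW.nonneg (hη.mem_Icc y))
  have hcont : Continuous fun y ↦ W (η y) * p * Phi W (η y) ^ (p - 1) := by
    refine ((hW.continuousOn.comp_continuous hη.continuous hη.mem_Icc).mul_const p).mul ?_
    exact (continuous_iff_continuousAt.2 fun y ↦ ((hW.hasDerivAt_phi (hη.mem y)).continuousAt).comp
      hη.continuous.continuousAt).rpow_const fun y ↦ .inr (by linarith)
  obtain ⟨c₀, hc₀, hmin⟩ := isCompact_Icc.exists_forall_le' (s := Icc (-r) r) hcont.continuousOn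
    (a := 0) fun y _ ↦ by
      have hWpos := hW.pos_on _ (hη.mem y)
      have hΦpos := hW.phi_pos (hη.mem y)
      positivity
  refine ⟨c₀, hc₀, fun a b ha hab hb ↦ ?_⟩
  have hanti := antitoneOn_of_hasDerivAt_nonpos (convex_Icc a b)
    (fun y _ ↦ (hderiv y).add ((hasDerivAt_id y).const_mul c₀)) (fun y hy ↦ by
      have hy' := interior_subset hy
      have := hmin y ⟨ha.trans hy'.1, hy'.2.trans hb⟩
      rw [mul_neg, hsq]
      linarith) (left_mem_Icc.2 hab) (right_mem_Icc.2 hab) hab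
  simp only [Pi.add_apply, id_eq] at hanti
  linarith

end TransitionProfile

/-! ### Radial integrals -/

/-- The radial function `F(|x|)` on `ℝⁿ` has the integral of the indicator of the ball of radius
`a`, expressed in polar coordinates. -/
structure HasBallMass (n : ℕ) (a : ℝ) (F : ℝ → ℝ) : Prop where
  integrableOn : IntegrableOn (fun t ↦ t ^ (n - 1) * F t) (Ioi 0)
  integral_eq : ∫ t in Ioi 0, t ^ (n - 1) * F t = a ^ n / n

lemma ballVol_pos (n : ℕ) : 0 < ballVol n :=
  ENNReal.toReal_pos (Metric.measure_ball_pos volume _ one_pos).ne' measure_ball_lt_top.ne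

lemma R0_pos (n : ℕ) : 0 < R0 n := rpow_pos_of_pos (ballVol_pos n) _

lemma R0_pow_mul_ballVol {n : ℕ} (hn : n ≠ 0) : R0 n ^ n * ballVol n = 1 := by
  rw [R0, ← rpow_natCast, ← rpow_mul (ballVol_pos n).le, div_mul_cancel₀ _ (by positivity),
    rpow_neg_one, inv_mul_cancel₀ (ballVol_pos n).ne']

lemma hasBallMass_of_integral_eq_one {n : ℕ} (hn : n ≠ 0) {ε : ℝ} (hε : 0 < ε) {F : ℝ → ℝ}
    (h : ∫ x : En n, F (‖x‖ / ε) = 1) : HasBallMass n (R0 n / ε) F := by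
  have : NeZero n := ⟨hn⟩
  have hpow : (∫ t in Ioi 0, t ^ (n - 1) * F (t / ε)) =
      ε ^ n * ∫ t in Ioi 0, t ^ (n - 1) * F t := by
    rw [← pow_sub_one_mul hn ε, mul_comm _ ε, mul_assoc, ← integral_const_mul]
    have hscale := integral_comp_mul_left_Ioi' (fun t ↦ t ^ (n - 1) * F (t / ε)) 0 hε
    rw [mul_zero, smul_eq_mul] at hscale
    simp only [← hscale, mul_pow, mul_div_cancel_left₀ _ hε.ne', mul_assoc]
  have hintegrable : IntegrableOn (fun t ↦ t ^ (n - 1) * F (t / ε)) (Ioi 0) := by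
    simpa using (integrable_fun_norm_addHaar (volume : Measure (En n))).1
      (integrable_of_integral_eq_one h)
  have hpolar : 1 = n * (ballVol n * ∫ t in Ioi 0, t ^ (n - 1) * F (t / ε)) := by
    simpa [ballVol, Measure.real, h] using
      integral_fun_norm_addHaar (volume : Measure (En n)) (fun r ↦ F (r / ε))
  constructor
  · have hscale := (integrableOn_Ioi_comp_mul_left_iff _ 0 hε).2 (by rwa [mul_zero])
    refine (hscale.const_mul (ε ^ (n - 1))⁻¹).congr (.of_forall fun t ↦ ?_)
    simp only [mul_pow, mul_div_cancel_left₀ _ hε.ne']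
    field_simp
  · rw [hpow] at hpolar
    rw [div_pow, div_div, eq_div_iff (by positivity)]
    linear_combination -(∫ t in Ioi 0, t ^ (n - 1) * F t) * (ε ^ n * n) *
      R0_pow_mul_ballVol hn - R0 n ^ n * hpolar

lemma integrable_exp_neg_mul_abs_sub {b : ℝ} (hb : 0 < b) (T : ℝ) :
    Integrable fun t : ℝ ↦ exp (-(b * |t - T|)) := by
  refine Integrable.comp_sub_right (f := fun t : ℝ ↦ exp (-(b * |t|))) ?_ T
  rw [← integrableOn_univ, ← Iic_union_Ioi (a := (0 : ℝ))]
  refine IntegrableOn.union ?_ ?_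
  · refine (integrableOn_exp_mul_Iic hb 0).congr_fun (fun t ht ↦ ?_) measurableSet_Iic
    simp only [abs_of_nonpos (mem_Iic.1 ht), mul_neg, neg_neg]
  · refine (exp_neg_integrableOn_Ioi 0 hb).congr_fun (fun t ht ↦ ?_) measurableSet_Ioi
    simp only [abs_of_pos (mem_Ioi.1 ht), neg_mul]

lemma pow_le_mul_exp {b u : ℝ} (hb : 0 < b) (hu : 0 ≤ u) (k : ℕ) :
    u ^ k ≤ k.factorial / b ^ k * exp (b * u) := by
  have h := pow_div_factorial_le_exp (x := b * u) (by positivity) k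
  rw [div_le_iff₀ (by positivity), mul_pow] at h
  rw [div_mul_eq_mul_div, le_div_iff₀ (by positivity)]
  linarith

lemma exists_pow_mul_exp_le (k : ℕ) {b : ℝ} (hb : 0 < b) : ∃ C > 0, ∀ T ≥ 1, ∀ t > 0,
    t ^ k * exp (-(b * |t - T|)) ≤ C * T ^ k * exp (-(b / 2 * |t - T|)) := by
  refine ⟨k.factorial / (b / 2) ^ k * exp (b / 2), by positivity, fun T hT t ht ↦ ?_⟩
  have ht' : t ≤ T * (1 + |t - T|) := by nlinarith [le_abs_self (t - T), abs_nonneg (t - T)]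
  calc t ^ k * exp (-(b * |t - T|))
      ≤ (T * (1 + |t - T|)) ^ k * exp (-(b * |t - T|)) := by gcongr
    _ ≤ T ^ k * (k.factorial / (b / 2) ^ k * exp (b / 2 * (1 + |t - T|))) *
        exp (-(b * |t - T|)) := by
      rw [mul_pow]
      gcongr
      exact pow_le_mul_exp (half_pos hb) (by positivity) k
    _ = k.factorial / (b / 2) ^ k * T ^ k *
        (exp (b / 2 * (1 + |t - T|)) * exp (-(b * |t - T|))) := by ring
    _ = k.factorial / (b / 2) ^ k * T ^ k * (exp (b / 2) * exp (-(b / 2 * |t - T|))) := by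
      rw [← exp_add, ← exp_add]
      ring_nf
    _ = _ := by ring

lemma exists_integral_pow_mul_exp_le (k : ℕ) {b : ℝ} (hb : 0 < b) : ∃ C > 0, ∀ T ≥ 1,
    IntegrableOn (fun t ↦ t ^ k * exp (-(b * |t - T|))) (Ioi 0) ∧
      ∫ t in Ioi 0, t ^ k * exp (-(b * |t - T|)) ≤ C * T ^ k := by
  obtain ⟨C, hC, hle⟩ := exists_pow_mul_exp_le k hb
  set J := ∫ t : ℝ, exp (-(b / 2 * |t|))
  have hJ0 : 0 ≤ J := integral_nonneg fun t ↦ (exp_pos _).le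
  refine ⟨C * (J + 1), by positivity, fun T hT ↦ ?_⟩
  have hT0 : 0 < T := by linarith
  have hdom : Integrable fun t : ℝ ↦ C * T ^ k * exp (-(b / 2 * |t - T|)) :=
    (integrable_exp_neg_mul_abs_sub (by positivity) T).const_mul _
  have hint : IntegrableOn (fun t ↦ t ^ k * exp (-(b * |t - T|))) (Ioi 0) := by
    refine Integrable.mono' hdom.integrableOn (by fun_prop) ?_
    refine (ae_restrict_iff' measurableSet_Ioi).2 (.of_forall fun t ht ↦ ?_)
    have ht0 : 0 < t := ht
    rw [Real.norm_of_nonneg (by positivity)]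
    exact hle T hT t ht
  refine ⟨hint, ?_⟩
  calc ∫ t in Ioi 0, t ^ k * exp (-(b * |t - T|))
      ≤ ∫ t in Ioi 0, C * T ^ k * exp (-(b / 2 * |t - T|)) :=
        setIntegral_mono_on hint hdom.integrableOn measurableSet_Ioi (hle T hT)
    _ ≤ ∫ t, C * T ^ k * exp (-(b / 2 * |t - T|)) :=
        setIntegral_le_integral hdom (.of_forall fun t ↦ by dsimp only [Pi.zero_apply]; positivity)
    _ = C * J * T ^ k := by
        rw [integral_const_mul, integral_sub_right_eq_self (fun t ↦ exp (-(b / 2 * |t|))) T]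
        ring
    _ ≤ C * (J + 1) * T ^ k := by gcongr; linarith

lemma exists_integral_pow_mul_le (k : ℕ) {b : ℝ} (hb : 0 < b) : ∃ C > 0, ∀ T ≥ 1, ∀ B ≥ 0,
    ∀ q : ℝ → ℝ, IntegrableOn (fun t ↦ t ^ k * q t) (Ioi 0) →
      (∀ t > 0, q t ≤ B * exp (-(b * |t - T|))) →
      ∫ t in Ioi 0, t ^ k * q t ≤ C * B * T ^ k := by
  obtain ⟨C, hC, hexp⟩ := exists_integral_pow_mul_exp_le k hb
  refine ⟨C, hC, fun T hT B hB q hq hle ↦ ?_⟩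
  obtain ⟨hint, hintle⟩ := hexp T hT
  calc ∫ t in Ioi 0, t ^ k * q t ≤ ∫ t in Ioi 0, B * (t ^ k * exp (-(b * |t - T|))) :=
        setIntegral_mono_on hq (hint.const_mul B) measurableSet_Ioi fun t ht ↦ by
          rw [mul_left_comm B]
          have ht0 : 0 < t := ht
          gcongr
          exact hle t ht
    _ = B * ∫ t in Ioi 0, t ^ k * exp (-(b * |t - T|)) := integral_const_mul _ _
    _ ≤ B * (C * T ^ k) := by gcongr
    _ = C * B * T ^ k := by ring

lemma hasBallMass_indicator {n : ℕ} (hn : n ≠ 0) {T : ℝ} (hT : 0 ≤ T) :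
    HasBallMass n T ((Iic T).indicator 1) := by
  obtain ⟨k, rfl⟩ := Nat.exists_eq_succ_of_ne_zero hn
  have heq : (fun t : ℝ ↦ t ^ k * (Iic T).indicator 1 t) = (Iic T).indicator fun t ↦ t ^ k := by
    ext t
    by_cases h : t ∈ Iic T <;> simp [h]
  refine ⟨?_, ?_⟩ <;> rw [Nat.succ_sub_one, heq]
  · rw [IntegrableOn, integrable_indicator_iff measurableSet_Iic, IntegrableOn,
      Measure.restrict_restrict measurableSet_Iic, inter_comm, Ioi_inter_Iic]
    exact (Continuous.integrableOn_Icc (by fun_prop)).mono_set Ioc_subset_Icc_self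
  · rw [setIntegral_indicator measurableSet_Iic, Ioi_inter_Iic,
      ← intervalIntegral.integral_of_le hT, integral_pow]
    simp

lemma le_add_of_pow_le_add {x y C : ℝ} (hx : 0 ≤ x) (hy : 0 < y) (hC : 0 ≤ C) {n : ℕ} (hn : n ≠ 0)
    (h : x ^ n ≤ y ^ n + C * y ^ (n - 1)) : x ≤ y + C := by
  obtain ⟨k, rfl⟩ := Nat.exists_eq_succ_of_ne_zero hn
  rcases le_total x y with hxy | hxy
  · linarith
  · have hpow : y ^ k ≤ x ^ k := by gcongr
    refine le_of_mul_le_mul_right ?_ (pow_pos hy k)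
    calc x * y ^ k ≤ x ^ (k + 1) := by rw [pow_succ']; gcongr
      _ ≤ (y + C) * y ^ k := by simpa [pow_succ', add_mul] using h

lemma sub_le_of_sub_le_pow {x y C : ℝ} (hx : 0 ≤ x) (hy : 0 < y) (hC : 0 ≤ C) {n : ℕ} (hn : n ≠ 0)
    (h : y ^ n - C * y ^ (n - 1) ≤ x ^ n) : y - C ≤ x := by
  obtain ⟨k, rfl⟩ := Nat.exists_eq_succ_of_ne_zero hn
  rcases le_total y x with hxy | hxy
  · linarith
  · have hpow : x ^ k ≤ y ^ k := by gcongr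
    refine le_of_mul_le_mul_right ?_ (pow_pos hy k)
    calc (y - C) * y ^ k ≤ x ^ (k + 1) := by simpa [pow_succ', sub_mul] using h
      _ ≤ x * y ^ k := by rw [pow_succ']; gcongr

section HasBallMass

variable {n : ℕ} {a b B : ℝ} {F : ℝ → ℝ}

lemma HasBallMass.sub {a' : ℝ} {F' : ℝ → ℝ} (hF : HasBallMass n a F) (hF' : HasBallMass n a' F') :
    IntegrableOn (fun t ↦ t ^ (n - 1) * (F t - F' t)) (Ioi 0) ∧
      ∫ t in Ioi 0, t ^ (n - 1) * (F t - F' t) = a ^ n / n - a' ^ n / n := by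
  simp only [mul_sub]
  exact ⟨hF.integrableOn.sub hF'.integrableOn, by
    rw [integral_sub hF.integrableOn hF'.integrableOn, hF.integral_eq, hF'.integral_eq]⟩

lemma exists_radius_le_add (hn : n ≠ 0) (hb : 0 < b) (hB : 0 ≤ B) : ∃ C > 0, ∀ T ≥ 1, ∀ a ≥ 0,
    ∀ F, HasBallMass n a F → (∀ t > 0, F t - (Iic T).indicator 1 t ≤ B * exp (-(b * |t - T|))) →
      a ≤ T + C := by
  obtain ⟨C, hC, hint⟩ := exists_integral_pow_mul_le (n - 1) hb
  refine ⟨n * (C * B) + 1, by positivity, fun T hT a ha F hF hle ↦ ?_⟩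
  have hT0 : 0 < T := by linarith
  obtain ⟨hdiff, heq⟩ := hF.sub (hasBallMass_indicator hn hT0.le)
  have h := hint T hT B hB _ hdiff hle
  rw [heq, ← sub_div, div_le_iff₀ (by positivity)] at h
  have := le_add_of_pow_le_add (C := n * (C * B)) ha hT0 (by positivity) hn (by linarith)
  linarith

lemma exists_sub_le_radius (hn : n ≠ 0) (hb : 0 < b) (hB : 0 ≤ B) : ∃ C > 0, ∀ T ≥ 1, ∀ a ≥ 0,
    ∀ F, HasBallMass n a F → (∀ t > 0, (Iic T).indicator 1 t - F t ≤ B * exp (-(b * |t - T|))) →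
      T - C ≤ a := by
  obtain ⟨C, hC, hint⟩ := exists_integral_pow_mul_le (n - 1) hb
  refine ⟨n * (C * B) + 1, by positivity, fun T hT a ha F hF hle ↦ ?_⟩
  have hT0 : 0 < T := by linarith
  obtain ⟨hdiff, heq⟩ := (hasBallMass_indicator hn hT0.le).sub hF
  have h := hint T hT B hB _ hdiff hle
  rw [heq, ← sub_div, div_le_iff₀ (by positivity)] at h
  have := sub_le_of_sub_le_pow (C := n * (C * B)) ha hT0 (by positivity) hn (by linarith)
  linarith

end HasBallMass

lemma eventually_div_le (A : ℝ) {b : ℝ} (hb : 0 < b) : ∀ᶠ a : ℝ in atTop, A / a ≤ b :=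
  (tendsto_const_nhds.div_atTop tendsto_id).eventually_le_const hb

lemma exists_le_of_integral_pow_mul_eq_zero (k : ℕ) {b : ℝ} (hb : 0 < b) : ∃ C > 0, ∀ T ≥ 2,
    ∀ B ≥ 0, ∀ d ≥ 0, ∀ q : ℝ → ℝ, IntegrableOn (fun t ↦ t ^ k * q t) (Ioi 0) →
      ∫ t in Ioi 0, t ^ k * q t = 0 →
      (∀ t > 0, (Icc (T - 1) (T + 1)).indicator (fun _ ↦ d) t - q t ≤ B * exp (-(b * |t - T|))) →
      d ≤ C * B := by
  obtain ⟨C, hC, hint⟩ := exists_integral_pow_mul_le k hb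
  refine ⟨C * 2 ^ k, by positivity, fun T hT B hB d hd q hq hq0 hle ↦ ?_⟩
  have hT0 : 0 < T := by linarith
  have hweight : (fun t : ℝ ↦ t ^ k * (Icc (T - 1) (T + 1)).indicator (fun _ ↦ d) t) =
      (Icc (T - 1) (T + 1)).indicator fun t ↦ t ^ k * d := by
    ext t
    by_cases h : t ∈ Icc (T - 1) (T + 1) <;> simp [h]
  have hcont : IntegrableOn (fun t : ℝ ↦ t ^ k * d) (Icc (T - 1) (T + 1)) :=
    Continuous.integrableOn_Icc (by fun_prop)
  have hindint : IntegrableOn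
      (fun t : ℝ ↦ t ^ k * (Icc (T - 1) (T + 1)).indicator (fun _ ↦ d) t) (Ioi 0) := by
    rw [hweight]
    exact ((integrable_indicator_iff measurableSet_Icc).2 hcont).integrableOn
  have hlower : (T / 2) ^ k * d ≤
      ∫ t in Ioi 0, t ^ k * (Icc (T - 1) (T + 1)).indicator (fun _ ↦ d) t := by
    rw [hweight, setIntegral_indicator measurableSet_Icc,
      inter_eq_right.2 fun t ht ↦ mem_Ioi.2 (by linarith [ht.1])]
    refine le_trans ?_ (setIntegral_ge_of_const_le_real (c := (T / 2) ^ k * d) measurableSet_Icc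
      (by simp) (fun t ht ↦ by have := ht.1; gcongr; linarith) hcont)
    rw [Real.volume_real_Icc_of_le (by linarith)]
    have : 0 ≤ (T / 2) ^ k * d := by positivity
    linarith
  have hupper := hint T (by linarith) B hB
    (fun t ↦ (Icc (T - 1) (T + 1)).indicator (fun _ ↦ d) t - q t)
    (by simpa only [mul_sub] using! hindint.sub hq) hle
  simp only [mul_sub] at hupper
  rw [integral_sub hindint hq, hq0, sub_zero] at hupper
  have hmul : d * T ^ k ≤ C * 2 ^ k * B * T ^ k := by
    have h := hlower.trans hupper
    rw [div_pow, div_mul_eq_mul_div, div_le_iff₀ (by positivity)] at h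
    linarith
  exact le_of_mul_le_mul_right hmul (by positivity)

lemma WellBounds.eventually_exists_exp_neg_lt {W : ℝ → ℝ} {m M c δ b : ℝ} {n : ℕ}
    (hw : WellBounds W m M c δ) (hn : 2 ≤ n) (hb : 0 < b) :
    ∀ᶠ a : ℝ in atTop, ∀ g : ℝ → ℝ, (∀ t, g t ∈ Icc (0 : ℝ) 1) →
      HasBallMass n a (fun t ↦ Vpot n W (g t)) → ∃ t ≥ a / 2, exp (-(b * (t - a / 2))) < g t := by
  have hM := hw.M_pos
  obtain ⟨C, hC, hradius⟩ := exists_radius_le_add (n := n) (B := 2 * M) (by omega) hb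
    (by positivity)
  filter_upwards [eventually_ge_atTop 2, eventually_gt_atTop (2 * C)] with a ha haC g hg hmass
  by_contra! hsmall
  have hle := hradius (a / 2) (by linarith) a (by linarith) _ hmass fun t _ ↦ ?_
  · linarith
  rcases le_or_gt t (a / 2) with h | h
  · rw [indicator_of_mem (mem_Iic.2 h), Pi.one_apply]
    exact (sub_nonpos.2 (hw.vpot_mem_Icc hn (hg t)).2).trans (by positivity)
  · have hlip := hw.abs_vpot_sub_vpot_le hn (hg t) (left_mem_Icc.2 zero_le_one)
    rw [vpot_zero hn, sub_zero, sub_zero, abs_of_nonneg (hg t).1] at hlip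
    rw [indicator_of_notMem (notMem_Iic.2 h), sub_zero, abs_of_pos (sub_pos.2 h)]
    exact (le_abs_self _).trans (hlip.trans (by gcongr; exact hsmall t h.le))

lemma DoubleWell.tendsto_zero_of_hasBallMass {W g : ℝ → ℝ} {n : ℕ} {a : ℝ} (hW : DoubleWell W)
    (hn : 2 ≤ n) (hg : ∀ t, g t ∈ Icc (0 : ℝ) 1) (hanti : AntitoneOn g (Ici 0))
    (hmass : HasBallMass n a (fun t ↦ Vpot n W (g t))) : Tendsto g atTop (nhds 0) := by
  rw [Metric.tendsto_atTop]
  by_contra! hcon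
  obtain ⟨L, hL, hfar⟩ := hcon
  have hge : ∀ t ≥ 0, L ≤ g t := fun t ht ↦ by
    obtain ⟨s, hs, hLs⟩ := hfar t
    rw [dist_zero_right, Real.norm_of_nonneg (hg s).1] at hLs
    exact hLs.trans (hanti ht (mem_Ici.2 (ht.trans hs)) hs)
  have hL1 : L ≤ 1 := (hge 0 le_rfl).trans (hg 0).2
  have hpos : 0 < Vpot n W (L / 2) :=
    rpow_pos_of_pos (hW.phi_pos ⟨by positivity, by linarith⟩) _
  have hconst : IntegrableOn (fun _ : ℝ ↦ Vpot n W (L / 2)) (Ioi 1) := by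
    refine Integrable.mono' (hmass.integrableOn.mono_set (Ioi_subset_Ioi zero_le_one))
      (by fun_prop) ((ae_restrict_iff' measurableSet_Ioi).2 (.of_forall fun t ht ↦ ?_))
    have ht1 : 1 < t := ht
    have hV : Vpot n W (L / 2) ≤ Vpot n W (g t) :=
      hW.monotoneOn_vpot hn ⟨by positivity, by linarith⟩ (hg t) (by linarith [hge t (by linarith)])
    rw [Real.norm_of_nonneg hpos.le]
    exact hV.trans (le_mul_of_one_le_left (hpos.le.trans hV) (one_le_pow₀ ht1.le))
  simp [integrableOn_const_iff, hpos.ne'] at hconst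

namespace TransitionProfile

variable {W η : ℝ → ℝ} {m M c δ : ℝ} {n : ℕ}

lemma exists_abs_sub_radius_le (hη : TransitionProfile W η) (hw : WellBounds W m M c δ)
    (hn : 2 ≤ n) : ∃ C > 0, ∀ T ≥ 1, ∀ a ≥ 0,
      HasBallMass n a (fun t ↦ Vpot n W (η (t - T))) → |T - a| ≤ C := by
  have hM := hw.M_pos
  obtain ⟨C₁, hC₁, hupper⟩ :=
    exists_radius_le_add (n := n) (B := 2 * M) (by omega) hw.m_pos (by positivity)
  obtain ⟨C₂, hC₂, hlower⟩ :=
    exists_sub_le_radius (n := n) (B := 2 * M) (by omega) hw.m_pos (by positivity)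
  refine ⟨C₁ + C₂, by positivity, fun T hT a ha hmass ↦ ?_⟩
  have hstep (t : ℝ) := abs_le.1 (hη.abs_vpot_sub_step_le hw hn T t)
  have h₁ := hupper T hT a ha _ hmass fun t _ ↦ (hstep t).2
  have h₂ := hlower T hT a ha _ hmass fun t _ ↦ by linarith [(hstep t).1]
  exact abs_le.2 ⟨by linarith, by linarith⟩

lemma exists_mul_min_le_vpot_sub (hη : TransitionProfile W η) (hW : DoubleWell W) (hn : 2 ≤ n) :
    ∃ c₀ > 0, ∀ p q, p ≤ q → |p| ≤ 1 ∨ |q| ≤ 1 →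
      c₀ * min (q - p) 1 ≤ Vpot n W (η p) - Vpot n W (η q) := by
  obtain ⟨c₀, hc₀, hdrop⟩ := hη.exists_mul_sub_le_vpot_sub hW hn 2
  refine ⟨c₀, hc₀, fun p q hpq hnear ↦ ?_⟩
  have hanti := hη.antitone_vpot hW hn
  have hd0 : 0 ≤ min (q - p) 1 := le_min (sub_nonneg.2 hpq) zero_le_one
  have hd1 := min_le_right (q - p) 1
  have hdpq := min_le_left (q - p) 1
  rcases hnear with h | h <;> rw [abs_le] at h
  · have hlocal := hdrop p (p + min (q - p) 1) (by linarith) (by linarith) (by linarith)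
    have hrest : Vpot n W (η q) ≤ _ := hanti (show p + min (q - p) 1 ≤ q by linarith)
    linarith
  · have hlocal := hdrop (q - min (q - p) 1) q (by linarith) (by linarith) (by linarith)
    have hrest : _ ≤ Vpot n W (η p) := hanti (show p ≤ q - min (q - p) 1 by linarith)
    linarith

/-- Shifting the profile changes `V ∘ η` monotonically, so equality of masses leaves no room for
a shift beyond the size of the error. -/
lemma exists_abs_sub_center_le (hη : TransitionProfile W η) (hW : DoubleWell W) (hn : 2 ≤ n)
    {b : ℝ} (hb : 0 < b) : ∃ C > 0, ∀ T' ≥ 2, ∀ T a, ∀ B ≥ 0, ∀ G, HasBallMass n a G →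
      HasBallMass n a (fun t ↦ Vpot n W (η (t - T))) →
      (∀ t > 0, |G t - Vpot n W (η (t - T'))| ≤ B * exp (-(b * |t - T'|))) →
      C * B < 1 → |T - T'| ≤ C * B := by
  obtain ⟨C, hC, hzero⟩ := exists_le_of_integral_pow_mul_eq_zero (n - 1) hb
  obtain ⟨c₀, hc₀, hdrop⟩ := hη.exists_mul_min_le_vpot_sub hW hn
  refine ⟨C / c₀, by positivity, fun T' hT' T a B hB G hG hT hle hCB ↦ ?_⟩
  have hshift : ∀ s s', s ≤ s' → (s = T' ∨ s' = T') → ∀ t,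
      (Icc (T' - 1) (T' + 1)).indicator (fun _ ↦ c₀ * min (s' - s) 1) t ≤
        Vpot n W (η (t - s')) - Vpot n W (η (t - s)) := fun s s' hs hcenter t ↦ by
    have hle' : t - s' ≤ t - s := by linarith
    refine indicator_apply_le' (fun ht ↦ ?_)
      fun _ ↦ sub_nonneg.2 (hη.antitone_vpot hW hn hle')
    have ht' : |t - T'| ≤ 1 := abs_le.2 ⟨by linarith [ht.1], by linarith [ht.2]⟩
    rw [show s' - s = t - s - (t - s') by ring]
    rcases hcenter with rfl | rfl
    exacts [hdrop _ _ hle' (.inr ht'), hdrop _ _ hle' (.inl ht')]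
  have hmin : c₀ * min |T - T'| 1 ≤ C * B := by
    rcases le_total T T' with h | h
    · rw [abs_of_nonpos (sub_nonpos.2 h), neg_sub]
      have hsub := hG.sub hT
      refine hzero T' hT' B hB _ (by positivity) _ hsub.1 (by rw [hsub.2, sub_self]) fun t ht ↦ ?_
      linarith [hshift T T' h (.inr rfl) t, (abs_le.1 (hle t ht)).1]
    · rw [abs_of_nonneg (sub_nonneg.2 h)]
      have hsub := hT.sub hG
      refine hzero T' hT' B hB _ (by positivity) _ hsub.1 (by rw [hsub.2, sub_self]) fun t ht ↦ ?_
      linarith [hshift T' T h (.inl rfl) t, (abs_le.1 (hle t ht)).2]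
  have hmin' : min |T - T'| 1 ≤ C / c₀ * B := by
    rw [div_mul_eq_mul_div, le_div_iff₀ hc₀]
    linarith
  exact (min_le_iff.1 hmin').resolve_right (not_le.2 hCB)

end TransitionProfile

/-! ### Approximate radial solutions -/

/-- A decreasing `[0, 1]`-valued solution of the radial equation `2 (g'' + ν / t * g') = W'(g)`
on the half-line, up to an error of size `σ g (1 - g)`. With `ν = n - 1` this is the equation of
`v` in the variable `t = |x| / ε`. -/
structure ApproxRadialSolution (ν : ℝ) (W : ℝ → ℝ) (σ : ℝ) (g : ℝ → ℝ) : Prop where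
  ν_nonneg : 0 ≤ ν
  σ_mem_Icc : σ ∈ Icc (0 : ℝ) 1
  contDiff : ContDiff ℝ 2 g
  deriv_zero : deriv g 0 = 0
  deriv_nonpos : ∀ t ≥ 0, deriv g t ≤ 0
  mem_Icc : ∀ t, g t ∈ Icc (0 : ℝ) 1
  ode : ∀ t > 0, |2 * (deriv (deriv g) t + ν / t * deriv g t) - derivWithin W (Icc 0 1) (g t)| ≤
    σ * (g t * (1 - g t))

namespace ApproxRadialSolution

variable {ν σ m M c δ t t₁ t₂ : ℝ} {W g : ℝ → ℝ}

lemma hasDerivAt (hg : ApproxRadialSolution ν W σ g) (t : ℝ) : HasDerivAt g (deriv g t) t :=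
  (hg.contDiff.differentiable two_ne_zero t).hasDerivAt

lemma hasDerivAt_deriv (hg : ApproxRadialSolution ν W σ g) (t : ℝ) :
    HasDerivAt (deriv g) (deriv (deriv g) t) t :=
  have hcontDiff : ContDiff ℝ (1 + 1) g := by simpa [one_add_one_eq_two] using hg.contDiff
  (hcontDiff.deriv'.differentiable one_ne_zero t).hasDerivAt

lemma antitoneOn (hg : ApproxRadialSolution ν W σ g) : AntitoneOn g (Ici 0) :=
  antitoneOn_of_hasDerivAt_nonpos (convex_Ici 0) (fun t _ ↦ hg.hasDerivAt t)
    fun t ht ↦ hg.deriv_nonpos t (interior_subset ht)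

lemma div_mul_deriv_nonpos (hg : ApproxRadialSolution ν W σ g) (ht : 0 ≤ t) :
    ν / t * deriv g t ≤ 0 :=
  mul_nonpos_of_nonneg_of_nonpos (div_nonneg hg.ν_nonneg ht) (hg.deriv_nonpos t ht)

lemma abs_radialLaplacian_le (hg : ApproxRadialSolution ν W σ g) (hw : WellBounds W m M c δ)
    (ht : 0 < t) :
    |deriv (deriv g) t + ν / t * deriv g t| ≤ (M + 1) / 2 * (g t * (1 - g t)) := by
  have hode := hg.ode t ht
  have hW' := hw.abs_derivWithin_le _ (hg.mem_Icc t)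
  have herr : σ * (g t * (1 - g t)) ≤ g t * (1 - g t) :=
    mul_le_of_le_one_left (self_mul_one_sub_nonneg (hg.mem_Icc t)) hg.σ_mem_Icc.2
  rw [abs_le] at hode hW' ⊢
  constructor <;> linarith [hode.1, hode.2, hW'.1, hW'.2]

lemma neg_deriv_le_one_sub (hg : ApproxRadialSolution ν W σ g) (hw : WellBounds W m M c δ)
    (ht : 0 ≤ t) : -deriv g t ≤ (M + 2) * (1 - g t) := by
  have hM := hw.M_pos
  have hgronwall := le_mul_exp_of_deriv_le_mul (convex_Ici 0) (k := -(M + 2))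
    (fun s _ ↦ (hg.hasDerivAt_deriv s).neg.sub (((hg.hasDerivAt s).const_sub 1).const_mul (M + 2)))
    (fun s hs ↦ by
      rw [interior_Ici] at hs
      have hs0 : 0 < s := hs
      have hlap := (abs_le.1 (hg.abs_radialLaplacian_le hw hs0)).1
      have hfriction := hg.div_mul_deriv_nonpos hs0.le
      have hle := self_mul_one_sub_le_one_sub (hg.mem_Icc s)
      have hpos := sub_nonneg.2 (hg.mem_Icc s).2
      simp only [Pi.sub_apply, Pi.neg_apply]
      nlinarith [mul_le_mul_of_nonneg_left hle hM.le, mul_nonneg hM.le hpos,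
        mul_nonneg (sq_nonneg M) hpos]) (mem_Ici.2 le_rfl) (mem_Ici.2 ht) ht
  have hinit : (-deriv g 0 - (M + 2) * (1 - g 0)) * exp (-(M + 2) * (t - 0)) ≤ 0 := by
    rw [hg.deriv_zero]
    exact mul_nonpos_of_nonpos_of_nonneg (by nlinarith [(hg.mem_Icc 0).2]) (exp_pos _).le
  exact sub_nonpos.1 (hgronwall.trans hinit)

lemma lt_one (hg : ApproxRadialSolution ν W σ g) (hw : WellBounds W m M c δ)
    (ht₁ : 0 ≤ t₁) (h : t₁ ≤ t₂) (hlt : g t₂ < 1) : g t₁ < 1 := by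
  have hgronwall := le_mul_exp_of_deriv_le_mul (convex_Ici 0) (k := M + 2)
    (fun s _ ↦ (hg.hasDerivAt s).const_sub 1)
    (fun s hs ↦ hg.neg_deriv_le_one_sub hw (interior_subset hs)) ht₁ (ht₁.trans h) h
  have := pos_of_mul_pos_left ((sub_pos.2 hlt).trans_le hgronwall) (exp_pos _).le
  linarith

lemma neg_deriv_le_self (hg : ApproxRadialSolution ν W σ g) (hw : WellBounds W m M c δ)
    (ht : 0 < t) (hν : ν ≤ t) : -deriv g t ≤ (M + 2) * g t := by
  have hM := hw.M_pos
  by_contra! hlt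
  have hgrow : ∀ s ∈ Ici t, -deriv g t - (M + 2) * g t ≤ -deriv g s := fun s hs ↦ by
    have hgronwall := mul_exp_le_of_mul_le_deriv (convex_Ici t) (k := M + 1)
      (fun s _ ↦ (hg.hasDerivAt_deriv s).neg.sub ((hg.hasDerivAt s).const_mul (M + 2)))
      (fun s hs ↦ by
        have hts : t ≤ s := interior_subset hs
        have hs0 : 0 < s := ht.trans_le hts
        have hlap := (abs_le.1 (hg.abs_radialLaplacian_le hw hs0)).2
        have hfriction : deriv g s ≤ ν / s * deriv g s :=
          le_mul_of_le_one_left (hg.deriv_nonpos s hs0.le) ((div_le_one hs0).2 (hν.trans hts))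
        have hle := self_mul_one_sub_le_self (hg.mem_Icc s)
        have hpos := (hg.mem_Icc s).1
        simp only [Pi.sub_apply, Pi.neg_apply]
        nlinarith [mul_le_mul_of_nonneg_left hle hM.le, mul_nonneg hM.le hpos,
          mul_nonneg (sq_nonneg M) hpos]) (mem_Ici.2 le_rfl) hs hs
    simp only [Pi.sub_apply, Pi.neg_apply] at hgronwall
    have hexp : 1 ≤ exp ((M + 1) * (s - t)) :=
      one_le_exp (mul_nonneg (by linarith) (sub_nonneg.2 hs))
    have := le_mul_of_one_le_right (sub_pos.2 hlt).le hexp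
    nlinarith [(hg.mem_Icc s).1]
  set κ := -deriv g t - (M + 2) * g t
  have hκ : 0 < κ := sub_pos.2 hlt
  have hts : t ≤ t + 2 / κ := by linarith [div_pos two_pos hκ]
  have hdrop := antitoneOn_of_hasDerivAt_nonpos (convex_Ici t)
    (fun s _ ↦ (hg.hasDerivAt s).add ((hasDerivAt_id s).const_mul κ))
    (fun s hs ↦ by linarith [hgrow s (interior_subset hs)]) (mem_Ici.2 le_rfl) hts hts
  simp only [Pi.add_apply, id_eq, mul_add, mul_div_cancel₀ _ hκ.ne'] at hdrop
  linarith [(hg.mem_Icc (t + 2 / κ)).1, (hg.mem_Icc t).2]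

lemma pos (hg : ApproxRadialSolution ν W σ g) (hw : WellBounds W m M c δ)
    (ht₁ : 0 < t₁) (hν : ν ≤ t₁) (hpos : 0 < g t₁) (h : t₁ ≤ t₂) : 0 < g t₂ := by
  have hgronwall := mul_exp_le_of_mul_le_deriv (convex_Ici t₁) (k := -(M + 2))
    (fun s _ ↦ hg.hasDerivAt s) (fun s hs ↦ by
      have hts : t₁ ≤ s := interior_subset hs
      linarith [hg.neg_deriv_le_self hw (ht₁.trans_le hts) (hν.trans hts)])
    (mem_Ici.2 le_rfl) h h
  exact (mul_pos hpos (exp_pos _)).trans_le hgronwall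

end ApproxRadialSolution

/-- The failure of equipartition of the energy: it vanishes identically for `g = η`. -/
def discrepancy (W g : ℝ → ℝ) (t : ℝ) : ℝ := deriv g t ^ 2 - W (g t)

namespace ApproxRadialSolution

variable {ν σ m M c δ t t₁ t₂ q B ρ : ℝ} {W g : ℝ → ℝ}

lemma hasDerivAt_discrepancy (hg : ApproxRadialSolution ν W σ g) (hW : DoubleWell W)
    (ht : g t ∈ Ioo (0 : ℝ) 1) :
    HasDerivAt (discrepancy W g)
      (deriv g t * (2 * deriv (deriv g) t - derivWithin W (Icc 0 1) (g t))) t := by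
  refine (((hg.hasDerivAt_deriv t).pow 2).sub
    ((hW.hasDerivAt ht).comp t (hg.hasDerivAt t))).congr_deriv ?_
  norm_num
  ring

lemma abs_second_deriv_sub_le (hg : ApproxRadialSolution ν W σ g) (ht : 0 < t) (hν : ν ≤ q * t)
    (hρ : g t * (1 - g t) ≤ ρ) (hB : -deriv g t ≤ B * ρ) :
    |2 * deriv (deriv g) t - derivWithin W (Icc 0 1) (g t)| ≤ (2 * q * B + σ) * ρ := by
  have hode := hg.ode t ht
  have hq : ν / t ≤ q := (div_le_iff₀ ht).2 hν
  have hq0 : 0 ≤ ν / t := div_nonneg hg.ν_nonneg ht.le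
  have hfriction := hg.div_mul_deriv_nonpos ht.le
  have hfriction' : ν / t * -deriv g t ≤ q * (B * ρ) :=
    mul_le_mul hq hB (neg_nonneg.2 (hg.deriv_nonpos t ht.le)) (hq0.trans hq)
  have herr : σ * (g t * (1 - g t)) ≤ σ * ρ := by
    gcongr
    exact hg.σ_mem_Icc.1
  rw [abs_le] at hode ⊢
  constructor <;> linarith [hode.1, hode.2]

lemma abs_deriv_discrepancy_le (hg : ApproxRadialSolution ν W σ g) (ht : 0 < t) (hν : ν ≤ q * t)
    (hρ : g t * (1 - g t) ≤ ρ) (hB : -deriv g t ≤ B * ρ) :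
    |deriv g t * (2 * deriv (deriv g) t - derivWithin W (Icc 0 1) (g t))| ≤
      (2 * q * B + σ) * (-deriv g t * ρ) := by
  have hneg := hg.deriv_nonpos t ht.le
  rw [abs_mul, abs_of_nonpos hneg]
  calc -deriv g t * |2 * deriv (deriv g) t - derivWithin W (Icc 0 1) (g t)|
      ≤ -deriv g t * ((2 * q * B + σ) * ρ) :=
        mul_le_mul_of_nonneg_left (hg.abs_second_deriv_sub_le ht hν hρ hB) (by linarith)
    _ = (2 * q * B + σ) * (-deriv g t * ρ) := by ring

lemma abs_discrepancy_le_sq (hg : ApproxRadialSolution ν W σ g) (hw : WellBounds W m M c δ)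
    (ht : 0 ≤ t) (hρ : g t * (1 - g t) ≤ ρ) (hB : -deriv g t ≤ B * ρ) :
    |discrepancy W g t| ≤ (B ^ 2 + M ^ 2) * ρ ^ 2 := by
  have hM := hw.M_pos
  have hkinetic : deriv g t ^ 2 ≤ (B * ρ) ^ 2 := by
    rw [← neg_sq]
    exact pow_le_pow_left₀ (neg_nonneg.2 (hg.deriv_nonpos t ht)) hB 2
  have hpotential : W (g t) ≤ (M * ρ) ^ 2 :=
    (Real.sqrt_le_left (by nlinarith [self_mul_one_sub_nonneg (hg.mem_Icc t)])).1
      ((hw.sqrt_le _ (hg.mem_Icc t)).trans (by gcongr))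
  have hnonneg := hw.nonneg (hg.mem_Icc t)
  rw [discrepancy, abs_le]
  constructor <;> nlinarith [sq_nonneg (deriv g t), sq_nonneg (B * ρ), sq_nonneg (M * ρ)]

/-- Integrates the derivative bound from `t` to `∞`, where the discrepancy vanishes. -/
lemma abs_discrepancy_le_mul_sq (hg : ApproxRadialSolution ν W σ g) (hw : WellBounds W m M c δ)
    (hlim : Tendsto g atTop (nhds 0)) (ht : 0 < t) (hν : ν ≤ q * t) (hq : q ≤ 1)
    (hmem : ∀ s ≥ t, g s ∈ Ioo (0 : ℝ) 1) :
    |discrepancy W g t| ≤ (2 * q * (M + 2) + σ) / 2 * g t ^ 2 := by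
  have hq0 : 0 ≤ q := nonneg_of_mul_nonneg_left (hg.ν_nonneg.trans hν) ht
  have hself {s : ℝ} (hs : t ≤ s) : -deriv g s ≤ (M + 2) * g s :=
    hg.neg_deriv_le_self hw (ht.trans_le hs) (by nlinarith [hg.ν_nonneg])
  have hzero : Tendsto (discrepancy W g) atTop (nhds 0) := by
    refine squeeze_zero_norm' ?_
      (by simpa using (hlim.pow 2).const_mul ((M + 2) ^ 2 + M ^ 2))
    filter_upwards [eventually_ge_atTop t] with s hs
    exact hg.abs_discrepancy_le_sq hw (ht.le.trans hs) (self_mul_one_sub_le_self (hg.mem_Icc s))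
      (hself hs)
  have hbound : ∀ s ≥ t, |discrepancy W g s - discrepancy W g t| ≤
      (2 * q * (M + 2) + σ) / 2 * (g t ^ 2 - g s ^ 2) := fun s hs ↦ by
    have h := abs_sub_le_of_abs_deriv_le (convex_Ici t)
      (fun r hr ↦ hg.hasDerivAt_discrepancy hw.toDoubleWell (hmem r hr))
      (fun r _ ↦ ((hg.hasDerivAt r).pow 2).const_mul (-((2 * q * (M + 2) + σ) / 2)))
      (fun r hr ↦ by
        have hr' : t ≤ r := interior_subset hr
        refine (hg.abs_deriv_discrepancy_le (ht.trans_le hr') (hν.trans (by gcongr))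
          (self_mul_one_sub_le_self (hg.mem_Icc r)) (hself hr')).trans (le_of_eq ?_)
        norm_num
        ring) (mem_Ici.2 le_rfl) hs hs
    simp only [Pi.pow_apply] at h
    linarith
  have hlhs := (hzero.sub_const (discrepancy W g t)).abs
  have hrhs := ((hlim.pow 2).const_sub (g t ^ 2)).const_mul ((2 * q * (M + 2) + σ) / 2)
  norm_num at hlhs hrhs
  exact le_of_tendsto_of_tendsto hlhs hrhs ((eventually_ge_atTop t).mono hbound)

lemma abs_discrepancy_le_add_mul_sq (hg : ApproxRadialSolution ν W σ g)
    (hw : WellBounds W m M c δ) (ht₁ : 0 < t₁) (hν : ν ≤ q * t₁)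
    (hmem : ∀ s ≥ t₁, g s ∈ Ioo (0 : ℝ) 1) (h : t₁ ≤ t₂) :
    |discrepancy W g t₂| ≤ ((M + 2) ^ 2 + M ^ 2) * (1 - g t₁) ^ 2 +
      (2 * q * (M + 2) + σ) / 2 * (1 - g t₂) ^ 2 := by
  have hM := hw.M_pos
  have hσ := hg.σ_mem_Icc.1
  have hq : 0 ≤ q := nonneg_of_mul_nonneg_left (hg.ν_nonneg.trans hν) ht₁
  have hinit := hg.abs_discrepancy_le_sq hw ht₁.le (self_mul_one_sub_le_one_sub (hg.mem_Icc t₁))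
    (hg.neg_deriv_le_one_sub hw ht₁.le)
  have hvar := abs_sub_le_of_abs_deriv_le (convex_Ici t₁)
    (fun r hr ↦ hg.hasDerivAt_discrepancy hw.toDoubleWell (hmem r hr))
    (fun r _ ↦ (((hg.hasDerivAt r).const_sub 1).pow 2).const_mul ((2 * q * (M + 2) + σ) / 2))
    (fun r hr ↦ by
      have hr' : t₁ ≤ r := interior_subset hr
      refine (hg.abs_deriv_discrepancy_le (ht₁.trans_le hr') (hν.trans (by gcongr))
        (self_mul_one_sub_le_one_sub (hg.mem_Icc r))
        (hg.neg_deriv_le_one_sub hw (ht₁.le.trans hr'))).trans (le_of_eq ?_)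
      norm_num
      ring) (mem_Ici.2 le_rfl) h h
  simp only [Pi.pow_apply] at hvar
  have hdrop : 0 ≤ (2 * q * (M + 2) + σ) / 2 * (1 - g t₁) ^ 2 := by positivity
  have := abs_sub_abs_le_abs_sub (discrepancy W g t₂) (discrepancy W g t₁)
  linarith

/-- Near the well `1` the function `1 - g` is convex with `(1 - g)'' ≥ c / 4 * (1 - g)`. -/
lemma mul_sq_mul_one_sub_le (hg : ApproxRadialSolution ν W σ g) (hw : WellBounds W m M c δ)
    (ht₁ : 0 < t₁) (hν : ν ≤ q * t₁) (hsmall : 2 * q * (M + 2) + σ ≤ c / 2) (h₁₂ : t₁ ≤ t₂)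
    (hδ : 1 - δ ≤ g t₂) : c / 8 * (t₂ - t₁) ^ 2 * (1 - g t₁) ≤ 1 - g t₂ := by
  have hc := hw.c_pos
  have hq : 0 ≤ q := nonneg_of_mul_nonneg_left (hg.ν_nonneg.trans hν) ht₁
  have hconvex : ∀ s ∈ Icc t₁ t₂, c / 4 * (1 - g t₁) ≤ -deriv (deriv g) s := fun s hs ↦ by
    have hs0 : 0 < s := ht₁.trans_le hs.1
    have hanti₁ := hg.antitoneOn (mem_Ici.2 ht₁.le) (mem_Ici.2 hs0.le) hs.1
    have hanti₂ := hg.antitoneOn (mem_Ici.2 hs0.le) (mem_Ici.2 (hs0.le.trans hs.2)) hs.2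
    have hwell := hw.le_neg_derivWithin (g s) ⟨hδ.trans hanti₂, (hg.mem_Icc s).2⟩
    have hode := (abs_le.1 (hg.abs_second_deriv_sub_le hs0 (hν.trans (by gcongr; exact hs.1))
      (self_mul_one_sub_le_one_sub (hg.mem_Icc s)) (hg.neg_deriv_le_one_sub hw hs0.le))).2
    have herr := mul_le_mul_of_nonneg_right hsmall (sub_nonneg.2 (hg.mem_Icc s).2)
    nlinarith
  have hshift {s : ℝ} (hs : s ∈ Icc 0 (t₂ - t₁)) : s + t₁ ∈ Icc t₁ t₂ :=
    ⟨by linarith [hs.1], by linarith [hs.2]⟩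
  have hquad := (mul_le_and_half_mul_sq_le_of_le_second_deriv (a := t₂ - t₁) (x := t₂ - t₁)
    (f := fun s ↦ 1 - g (s + t₁))
    (fun s _ ↦ (((hg.hasDerivAt (s + t₁)).comp_add_const s t₁).const_sub 1).hasDerivWithinAt)
    (fun s _ ↦ ((hg.hasDerivAt_deriv (s + t₁)).comp_add_const s t₁).neg.hasDerivWithinAt)
    (sub_nonneg.2 (hg.mem_Icc _).2)
    (neg_nonneg.2 (hg.deriv_nonpos _ (by rw [zero_add]; exact ht₁.le)))
    (fun s hs ↦ hconvex _ (hshift hs)) ⟨sub_nonneg.2 h₁₂, le_rfl⟩).2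
  rw [sub_add_cancel] at hquad
  linarith

end ApproxRadialSolution

lemma min_sq_one_sub_sq_le {x : ℝ} (hx : x ∈ Icc (0 : ℝ) 1) :
    min (x ^ 2) ((1 - x) ^ 2) ≤ 4 * (x * (1 - x)) ^ 2 := by
  obtain ⟨hx0, hx1⟩ := hx
  rcases le_total x (1 / 2) with hhalf | hhalf
  · refine (min_le_left _ _).trans ?_
    nlinarith [pow_le_pow_left₀ hx0 (show x ≤ 2 * (x * (1 - x)) by nlinarith) 2]
  · refine (min_le_right _ _).trans ?_
    nlinarith [pow_le_pow_left₀ (sub_nonneg.2 hx1) (show 1 - x ≤ 2 * (x * (1 - x)) by nlinarith) 2]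

lemma WellBounds.mul_sq_le {W : ℝ → ℝ} {m M c δ x : ℝ} (hw : WellBounds W m M c δ)
    (hx : x ∈ Icc (0 : ℝ) 1) : m ^ 2 * (x * (1 - x)) ^ 2 ≤ W x := by
  rw [← mul_pow, ← Real.sq_sqrt (hw.nonneg hx)]
  exact pow_le_pow_left₀ (mul_nonneg hw.m_pos.le (self_mul_one_sub_nonneg hx)) (hw.le_sqrt x hx) 2

namespace ApproxRadialSolution

variable {ν σ m M c δ a t t₁ t₂ q : ℝ} {W g : ℝ → ℝ}

lemma mem_Ioo (hg : ApproxRadialSolution ν W σ g) (hw : WellBounds W m M c δ)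
    (hlim : Tendsto g atTop (nhds 0)) (ht₁ : 0 < t₁) (hν : ν ≤ t₁) (hpos : 0 < g t₁)
    (h : t₁ ≤ t₂) : g t₂ ∈ Ioo (0 : ℝ) 1 := by
  obtain ⟨t₃, ht₃, hlt⟩ := ((eventually_ge_atTop t₂).and
    (hlim.eventually (eventually_lt_nhds one_pos))).exists
  exact ⟨hg.pos hw ht₁ hν hpos h, hg.lt_one hw (ht₁.le.trans h) ht₃ hlt⟩

/-- Below the level `1 - δ` equipartition forces exponential decay. -/
lemma deriv_le_neg_mul (hg : ApproxRadialSolution ν W σ g) (hw : WellBounds W m M c δ)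
    (hlim : Tendsto g atTop (nhds 0)) (ht : 0 < t) (hν : ν ≤ q * t) (hq : q ≤ 1)
    (hmem : ∀ s ≥ t, g s ∈ Ioo (0 : ℝ) 1) (hsmall : 2 * q * (M + 2) + σ ≤ m ^ 2 * δ ^ 2)
    (hδ : g t ≤ 1 - δ) : deriv g t ≤ -(m * δ / 2) * g t := by
  have hm := hw.m_pos
  have hδ0 := hw.δ_pos
  have hg0 := (hg.mem_Icc t).1
  have hpotential : (m * δ * g t) ^ 2 ≤ W (g t) :=
    calc (m * δ * g t) ^ 2 ≤ m ^ 2 * (g t * (1 - g t)) ^ 2 := by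
          rw [← mul_pow]
          refine pow_le_pow_left₀ (by positivity) ?_ 2
          nlinarith [mul_le_mul_of_nonneg_left (le_sub_comm.1 hδ) (mul_nonneg hm.le hg0)]
      _ ≤ W (g t) := hw.mul_sq_le (hg.mem_Icc t)
  have hdisc := (abs_le.1 (hg.abs_discrepancy_le_mul_sq hw hlim ht hν hq hmem)).1
  have herr := mul_le_mul_of_nonneg_right hsmall (sq_nonneg (g t))
  rw [discrepancy] at hdisc
  have hkinetic : (m * δ / 2 * g t) ^ 2 ≤ (-deriv g t) ^ 2 := by
    nlinarith [sq_nonneg (m * δ * g t)]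
  have := abs_le_of_sq_le_sq hkinetic (neg_nonneg.2 (hg.deriv_nonpos t ht.le))
  linarith [le_abs_self (m * δ / 2 * g t)]

lemma one_sub_sq_le_div_mul (hg : ApproxRadialSolution ν W σ g) (hw : WellBounds W m M c δ)
    (ha : 1 ≤ a) (hν : ν ≤ q * (a / 8)) (hsmall : 2 * q * (M + 2) + σ ≤ c / 2)
    (hδ : 1 - δ ≤ g (a / 4)) (ht : a / 4 ≤ t) :
    (1 - g (a / 8)) ^ 2 ≤ (512 / c) ^ 2 / a * (1 - g t) ^ 2 := by
  have hc := hw.c_pos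
  have hquad := hg.mul_sq_mul_one_sub_le hw (by positivity) hν hsmall
    (show a / 8 ≤ a / 4 by linarith) hδ
  have hanti := hg.antitoneOn (mem_Ici.2 (by positivity)) (mem_Ici.2 (by linarith)) ht
  have hle : 1 - g (a / 8) ≤ 512 / c / a ^ 2 * (1 - g t) :=
    calc 1 - g (a / 8) = 512 / c / a ^ 2 * (c / 8 * (a / 4 - a / 8) ^ 2 * (1 - g (a / 8))) := by
          field_simp
          ring
      _ ≤ 512 / c / a ^ 2 * (1 - g t) := by
          gcongr
          linarith
  calc (1 - g (a / 8)) ^ 2 ≤ (512 / c / a ^ 2 * (1 - g t)) ^ 2 :=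
        pow_le_pow_left₀ (sub_nonneg.2 (hg.mem_Icc _).2) hle 2
    _ = (512 / c) ^ 2 / a ^ 4 * (1 - g t) ^ 2 := by field_simp
    _ ≤ (512 / c) ^ 2 / a * (1 - g t) ^ 2 := by
        gcongr
        exact le_self_pow₀ ha four_ne_zero

/-- Both one-sided bounds hold at every point; the better one is comparable to `W (g t)`. -/
lemma abs_discrepancy_le_mul (hg : ApproxRadialSolution ν W σ g) (hw : WellBounds W m M c δ)
    (hlim : Tendsto g atTop (nhds 0)) (ha : 1 ≤ a) (hν : ν ≤ q * (a / 8)) (hq : q ≤ 1)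
    (hmem : ∀ s ≥ a / 8, g s ∈ Ioo (0 : ℝ) 1)
    (hsmall : 2 * q * (M + 2) + σ ≤ c / 2) (hδ : 1 - δ ≤ g (a / 4)) (ht : a / 4 ≤ t) :
    |discrepancy W g t| ≤ 4 / m ^ 2 *
      (((M + 2) ^ 2 + M ^ 2) * (512 / c) ^ 2 / a + (2 * q * (M + 2) + σ)) * W (g t) := by
  have hm := hw.m_pos
  have hM := hw.M_pos
  have hc := hw.c_pos
  have hσ := hg.σ_mem_Icc.1
  have hq0 : 0 ≤ q := nonneg_of_mul_nonneg_left (hg.ν_nonneg.trans hν) (by positivity)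
  set A := ((M + 2) ^ 2 + M ^ 2) * (512 / c) ^ 2 / a with hA
  set L := 2 * q * (M + 2) + σ
  have hA0 : 0 ≤ A := by positivity
  have hL0 : 0 ≤ L := by positivity
  have hright : |discrepancy W g t| ≤ (A + L) * g t ^ 2 := by
    have := hg.abs_discrepancy_le_mul_sq hw hlim (show 0 < t by linarith)
      (hν.trans (by gcongr; linarith)) hq fun s hs ↦ hmem s (by linarith)
    nlinarith [sq_nonneg (g t)]
  have hleft : |discrepancy W g t| ≤ (A + L) * (1 - g t) ^ 2 := by
    have hinit := mul_le_mul_of_nonneg_left (hg.one_sub_sq_le_div_mul hw ha hν hsmall hδ ht)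
      (show 0 ≤ (M + 2) ^ 2 + M ^ 2 by positivity)
    rw [← mul_assoc, ← mul_div_assoc, ← hA] at hinit
    have := hg.abs_discrepancy_le_add_mul_sq hw (by positivity) hν hmem
      (show a / 8 ≤ t by linarith)
    nlinarith [sq_nonneg (1 - g t)]
  calc |discrepancy W g t| ≤ (A + L) * min (g t ^ 2) ((1 - g t) ^ 2) := by
        rw [mul_min_of_nonneg _ _ (by positivity)]
        exact le_min hright hleft
    _ ≤ (A + L) * (4 * (g t * (1 - g t)) ^ 2) := by
        gcongr
        exact min_sq_one_sub_sq_le (hg.mem_Icc t)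
    _ = 4 / m ^ 2 * (A + L) * (m ^ 2 * (g t * (1 - g t)) ^ 2) := by field_simp
    _ ≤ 4 / m ^ 2 * (A + L) * W (g t) := by
        gcongr
        exact hw.mul_sq_le (hg.mem_Icc t)

end ApproxRadialSolution

namespace ApproxRadialSolution

variable {ν σ m M c δ κ a t t' t₀ : ℝ} {W g η : ℝ → ℝ}

lemma abs_inv_sqrt_mul_deriv_sub_one_le (hg : ApproxRadialSolution ν W σ g) (hW : DoubleWell W)
    (ht : 0 ≤ t) (hmem : g t ∈ Ioo (0 : ℝ) 1) (hdisc : |discrepancy W g t| ≤ κ * W (g t)) :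
    |-(√(W (g t)))⁻¹ * deriv g t - 1| ≤ κ := by
  have hWpos := hW.pos_on _ hmem
  have hspeed : 0 ≤ -(√(W (g t)))⁻¹ * deriv g t :=
    mul_nonneg_of_nonpos_of_nonpos (neg_nonpos.2 (by positivity)) (hg.deriv_nonpos t ht)
  set w := -(√(W (g t)))⁻¹ * deriv g t with hw
  have hfactor : discrepancy W g t = (w - 1) * ((w + 1) * W (g t)) := by
    have hsq : w ^ 2 * W (g t) = deriv g t ^ 2 := by
      rw [hw, mul_pow, neg_sq, inv_pow, Real.sq_sqrt hWpos.le]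
      field_simp
    rw [discrepancy, ← hsq]
    ring
  rw [hfactor, abs_mul, abs_of_nonneg (show 0 ≤ (w + 1) * W (g t) by positivity),
    ← mul_assoc] at hdisc
  refine le_trans ?_ (le_of_mul_le_mul_right hdisc hWpos)
  exact le_mul_of_one_le_right (abs_nonneg _) (by linarith)

/-- Wherever the discrepancy is small, `g` is the profile run at almost unit speed. -/
lemma abs_profileInv_sub_sub_le (hg : ApproxRadialSolution ν W σ g) (hW : DoubleWell W)
    (ht₀ : 0 ≤ t₀) (hmem : ∀ s ≥ t₀, g s ∈ Ioo (0 : ℝ) 1)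
    (hdisc : ∀ s ≥ t₀, |discrepancy W g s| ≤ κ * W (g s)) (ht : t₀ ≤ t) (ht' : t₀ ≤ t') :
    |profileInv W (g t) - profileInv W (g t') - (t - t')| ≤ κ * |t - t'| := by
  have h := (convex_Ici t₀).norm_image_sub_le_of_norm_hasDerivWithin_le
    (f := fun s ↦ profileInv W (g s) - s)
    (fun s hs ↦ (((hW.hasDerivAt_profileInv (hmem s hs)).comp s (hg.hasDerivAt s)).sub
      (hasDerivAt_id s)).hasDerivWithinAt)
    (fun s hs ↦ hg.abs_inv_sqrt_mul_deriv_sub_one_le hW (ht₀.trans hs) (hmem s hs) (hdisc s hs))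
    ht' ht
  rw [Real.norm_eq_abs, Real.norm_eq_abs] at h
  convert h using 2
  ring

lemma abs_sub_profile_le_exp (hg : ApproxRadialSolution ν W σ g) (hη : TransitionProfile W η)
    (hw : WellBounds W m M c δ) (ht : 0 ≤ t) (htt : t ≤ t₀) (htt' : 2 * t₀ ≤ t')
    (hmem : g t₀ ∈ Ioo (0 : ℝ) 1) (hle : profileInv W (g t₀) ≤ -(t' / 4)) :
    |g t - η (t - t')| ≤ exp (-(m * t' / 4)) := by
  have hm := hw.m_pos
  have hanti := hg.antitoneOn (mem_Ici.2 ht) (mem_Ici.2 (ht.trans htt)) htt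
  have h₁ := hη.one_sub_le_exp hw.le_sqrt (y := profileInv W (g t₀)) (by linarith)
  have h₂ := hη.one_sub_le_exp hw.le_sqrt (y := t - t') (by linarith)
  rw [hη.apply_profileInv hw.toDoubleWell hmem] at h₁
  have hexp₁ : exp (m * profileInv W (g t₀)) ≤ exp (-(m * t' / 4)) :=
    exp_le_exp.2 (by nlinarith)
  have hexp₂ : exp (m * (t - t')) ≤ exp (-(m * t' / 4)) := exp_le_exp.2 (by nlinarith)
  rw [abs_le]
  constructor <;> linarith [(hg.mem_Icc t).2, (hη.mem t).2, (hη.mem (t - t')).2]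

lemma abs_sub_profile_le (hg : ApproxRadialSolution ν W σ g) (hη : TransitionProfile W η)
    (hw : WellBounds W m M c δ) (ha : 0 < a) (hmem : ∀ s ≥ a / 4, g s ∈ Ioo (0 : ℝ) 1)
    (hdisc : ∀ s ≥ a / 4, |discrepancy W g s| ≤ κ * W (g s)) (hκ0 : 0 ≤ κ) (hκ : κ ≤ 1 / 2)
    (ht' : a / 2 ≤ t') (hhalf : g t' = 1 / 2) (ht : 0 < t) :
    |g t - η (t - t')| ≤ (M * exp (m / 2) * (1 + 4 / m) * κ + 16 / m / a) *
      exp (-(m / 8 * |t - t'|)) := by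
  have hm := hw.m_pos
  have hM := hw.M_pos
  have ht'0 : 0 < t' := by linarith
  have hzero : profileInv W (g t') = 0 := by simp [hhalf, profileInv]
  have hspeed {s : ℝ} (hs : a / 4 ≤ s) :
      |profileInv W (g s) - (s - t')| ≤ κ * |s - t'| := by
    simpa [hzero] using hg.abs_profileInv_sub_sub_le hw.toDoubleWell (by positivity) hmem hdisc hs
      (show a / 4 ≤ t' by linarith)
  rw [add_mul]
  rcases lt_or_ge t (a / 4) with hfar | hnear
  · refine le_add_of_nonneg_of_le (by positivity) ?_
    have hle : profileInv W (g (a / 4)) ≤ -(t' / 4) := by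
      have h := (abs_le.1 (hspeed le_rfl)).2
      rw [abs_of_neg (by linarith)] at h
      nlinarith
    calc |g t - η (t - t')| ≤ exp (-(m * t' / 4)) :=
          hg.abs_sub_profile_le_exp hη hw ht.le hfar.le (by linarith) (hmem _ le_rfl) hle
      _ = exp (-(m * t' / 8)) * exp (-(m / 8 * t')) := by rw [← exp_add]; ring_nf
      _ ≤ (m * t' / 8)⁻¹ * exp (-(m / 8 * |t - t'|)) := by
          gcongr
          · exact exp_neg_le_inv (by positivity)
          · exact abs_le.2 ⟨by linarith, by linarith⟩
      _ ≤ (m * (a / 2) / 8)⁻¹ * exp (-(m / 8 * |t - t'|)) := by gcongr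
      _ = 16 / m / a * exp (-(m / 8 * |t - t'|)) := by field_simp; norm_num
  · refine le_add_of_le_of_nonneg ?_ (by positivity)
    have h := hη.abs_sub_le_of_abs_sub_le hw hκ (y := t - t') (z := profileInv W (g t))
      ((hspeed hnear).trans (by gcongr; linarith))
    rw [hη.apply_profileInv hw.toDoubleWell (hmem t hnear)] at h
    refine h.trans ?_
    gcongr
    norm_num

end ApproxRadialSolution

lemma TransitionProfile.abs_sub_le_of_abs_sub_center_le {W η : ℝ → ℝ}
    {m M c δ κ B L a t x T T' : ℝ} (hη : TransitionProfile W η) (hw : WellBounds W m M c δ)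
    (hκ : κ ≤ 1 / 2) (hTT' : |T - T'| ≤ κ) (hT'a : |T' - a| ≤ L) (hB : 0 ≤ B)
    (hx : |x - η (t - T')| ≤ B * exp (-(m / 8 * |t - T'|))) :
    |x - η (t - T)| ≤ (M * exp (m / 2) * (1 + 4 / m) * κ + B) * exp (m / 8 * L) *
      exp (-(m / 8 * |t - a|)) := by
  have hm := hw.m_pos
  have hM := hw.M_pos
  have hκ0 : 0 ≤ κ := (abs_nonneg _).trans hTT'
  have hprofile : |η (t - T) - η (t - T')| ≤
      M * exp (m / 2) * (1 + 4 / m) * κ * exp (-(m / 8 * |t - T'|)) := by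
    refine (hη.abs_sub_le_of_abs_sub_le hw hκ ?_).trans ?_
    · rw [sub_sub_sub_cancel_left, abs_sub_comm]
      exact hTT'.trans (le_mul_of_one_le_right hκ0 (by linarith [abs_nonneg (t - T')]))
    · gcongr
      norm_num
  have hdist : |t - a| ≤ |t - T'| + L := (abs_sub_le t T' a).trans (by gcongr)
  calc |x - η (t - T)| ≤ |x - η (t - T')| + |η (t - T) - η (t - T')| := by
        rw [abs_sub_comm (η (t - T))]
        exact abs_sub_le _ _ _
    _ ≤ (M * exp (m / 2) * (1 + 4 / m) * κ + B) * exp (-(m / 8 * |t - T'|)) := by linarith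
    _ ≤ (M * exp (m / 2) * (1 + 4 / m) * κ + B) * exp (m / 8 * L + -(m / 8 * |t - a|)) := by
        gcongr
        nlinarith
    _ = (M * exp (m / 2) * (1 + 4 / m) * κ + B) * exp (m / 8 * L) * exp (-(m / 8 * |t - a|)) := by
        rw [exp_add]
        ring

/-- An approximate radial solution `t ↦ v(ε t)` in dimension `n`, whose `V`-mass is that of a ball
of radius `a = R₀ / ε`; the multiplier `ε E` of the paper becomes an error of size `K / a`. -/
structure RescaledSolution (n : ℕ) (W : ℝ → ℝ) (K a : ℝ) (g : ℝ → ℝ) : Prop extends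
    ApproxRadialSolution (n - 1) W (K / a) g where
  hasBallMass : HasBallMass n a fun t ↦ Vpot n W (g t)

namespace RescaledSolution

variable {n : ℕ} {m M c δ K a : ℝ} {W g η : ℝ → ℝ}

lemma tendsto_zero (hg : RescaledSolution n W K a g) (hW : DoubleWell W) (hn : 2 ≤ n) :
    Tendsto g atTop (nhds 0) :=
  hW.tendsto_zero_of_hasBallMass hn hg.mem_Icc hg.antitoneOn hg.hasBallMass

lemma eventually_mem_Ioo (hw : WellBounds W m M c δ) (hn : 2 ≤ n) (K : ℝ) :
    ∀ᶠ a in atTop, ∀ g, RescaledSolution n W K a g → ∀ t ≥ a / 8, g t ∈ Ioo (0 : ℝ) 1 := by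
  filter_upwards [eventually_gt_atTop 0, eventually_ge_atTop (8 * ((n : ℝ) - 1)),
    hw.eventually_exists_exp_neg_lt hn one_pos] with a ha hna hexp g hg t ht
  obtain ⟨s, hs, hgs⟩ := hexp g hg.mem_Icc hg.hasBallMass
  have hpos : 0 < g (a / 8) := (exp_pos _).trans (hgs.trans_le
    (hg.antitoneOn (mem_Ici.2 (by positivity)) (mem_Ici.2 (by linarith)) (by linarith)))
  exact hg.mem_Ioo hw (hg.tendsto_zero hw.toDoubleWell hn) (by positivity) (by linarith) hpos ht

/-- Otherwise `g` would decay exponentially from `a / 2` on, and have too little mass. -/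
lemma eventually_one_sub_le (hw : WellBounds W m M c δ) (hn : 2 ≤ n) (K : ℝ) :
    ∀ᶠ a in atTop, ∀ g, RescaledSolution n W K a g → 1 - δ ≤ g (a / 2) := by
  have hm := hw.m_pos
  have hδ := hw.δ_pos
  filter_upwards [eventually_gt_atTop 0, eventually_mem_Ioo hw hn K,
    hw.eventually_exists_exp_neg_lt hn (b := m * δ / 2) (by positivity),
    eventually_div_le (8 * ((n : ℝ) - 1)) one_pos,
    eventually_div_le (16 * ((n : ℝ) - 1) * (M + 2) + K) (b := m ^ 2 * δ ^ 2) (by positivity)]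
    with a ha hmem hexp hq hsmall g hg
  by_contra! hlt
  obtain ⟨t, ht, hgt⟩ := hexp g hg.mem_Icc hg.hasBallMass
  have hdecay : ∀ s ∈ Ici (a / 2), deriv g s ≤ -(m * δ / 2) * g s := fun s hs ↦ by
    have hs : a / 2 ≤ s := hs
    refine hg.deriv_le_neg_mul hw (hg.tendsto_zero hw.toDoubleWell hn) (by linarith) ?_ hq
      (fun r hr ↦ hmem g hg r (by linarith)) (le_trans (le_of_eq ?_) hsmall)
      ((hg.antitoneOn (mem_Ici.2 (by positivity)) (mem_Ici.2 (by linarith)) hs).trans hlt.le)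
    · rw [div_mul_eq_mul_div, le_div_iff₀ ha]
      nlinarith [hg.ν_nonneg]
    · ring
  have hle := le_mul_exp_of_deriv_le_mul (convex_Ici (a / 2)) (fun s _ ↦ hg.hasDerivAt s)
    (fun s hs ↦ hdecay s (interior_subset hs)) (mem_Ici.2 le_rfl) (mem_Ici.2 ht) ht
  rw [neg_mul] at hle
  exact (hgt.trans_le hle).not_ge
    (mul_le_of_le_one_left (exp_pos _).le (hg.mem_Icc _).2)

lemma exists_eventually_abs_discrepancy_le (hw : WellBounds W m M c δ) (hn : 2 ≤ n)
    (hK : 0 < K) : ∃ C > 0, ∀ᶠ a in atTop, ∀ g, RescaledSolution n W K a g →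
      ∀ t ≥ a / 4, |discrepancy W g t| ≤ C / a * W (g t) := by
  have hm := hw.m_pos
  have hM := hw.M_pos
  have hc := hw.c_pos
  have hn1 : (0 : ℝ) ≤ n - 1 := sub_nonneg.2 (by exact_mod_cast one_le_two.trans hn)
  refine ⟨4 / m ^ 2 * (((M + 2) ^ 2 + M ^ 2) * (512 / c) ^ 2 +
    (16 * ((n : ℝ) - 1) * (M + 2) + K)), by positivity, ?_⟩
  filter_upwards [eventually_ge_atTop 1, eventually_mem_Ioo hw hn K,
    eventually_one_sub_le hw hn K, eventually_div_le (8 * ((n : ℝ) - 1)) one_pos,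
    eventually_div_le (16 * ((n : ℝ) - 1) * (M + 2) + K) (b := c / 2) (by positivity)]
    with a ha hmem hmid hq hsmall g hg t ht
  have hδ : 1 - δ ≤ g (a / 4) := (hmid g hg).trans
    (hg.antitoneOn (mem_Ici.2 (by positivity)) (mem_Ici.2 (by positivity)) (by linarith))
  refine (hg.abs_discrepancy_le_mul hw (hg.tendsto_zero hw.toDoubleWell hn) ha (le_of_eq ?_) hq
    (hmem g hg) (le_trans (le_of_eq ?_) hsmall) hδ ht).trans (le_of_eq ?_)
  · field_simp
  · ring
  · ring

lemma exists_center (hg : RescaledSolution n W K a g) (hw : WellBounds W m M c δ) (hn : 2 ≤ n)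
    (hmid : 1 - δ ≤ g (a / 2)) : ∃ T ≥ a / 2, g T = 1 / 2 := by
  have hlim := hg.tendsto_zero hw.toDoubleWell hn
  obtain ⟨t, ht, hlt⟩ := ((eventually_ge_atTop (a / 2)).and
    (hlim.eventually (eventually_lt_nhds (show (0 : ℝ) < 1 / 2 by norm_num)))).exists
  obtain ⟨T, hT, hgT⟩ := intermediate_value_Icc' ht hg.contDiff.continuous.continuousOn
    ⟨hlt.le, show 1 / 2 ≤ g (a / 2) by linarith [hw.δ_lt]⟩
  exact ⟨T, hT.1, hgT⟩

lemma exists_eventually_exists_center (hη : TransitionProfile W η) (hw : WellBounds W m M c δ)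
    (hn : 2 ≤ n) (hK : 0 < K) : ∃ C > 0, ∀ᶠ a in atTop, ∀ g, RescaledSolution n W K a g →
      ∃ T ≥ a / 2, ∀ t > 0, |g t - η (t - T)| ≤ C / a * exp (-(m / 8 * |t - T|)) := by
  have hm := hw.m_pos
  have hM := hw.M_pos
  obtain ⟨C, hC, hdisc⟩ := exists_eventually_abs_discrepancy_le hw hn hK
  refine ⟨M * exp (m / 2) * (1 + 4 / m) * C + 16 / m, by positivity, ?_⟩
  filter_upwards [eventually_gt_atTop 0, hdisc, eventually_mem_Ioo hw hn K,
    eventually_one_sub_le hw hn K, eventually_div_le C (b := 1 / 2) (by norm_num)]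
    with a ha hdisc hmem hmid hsmall g hg
  obtain ⟨T, hT, hhalf⟩ := hg.exists_center hw hn (hmid g hg)
  refine ⟨T, hT, fun t ht ↦ (hg.abs_sub_profile_le hη hw ha
    (fun s hs ↦ hmem g hg s (by linarith)) (hdisc g hg) (by positivity) hsmall hT hhalf
    ht).trans (le_of_eq ?_)⟩
  ring

/-- The mass constraint, shared by `g` and the profile centred at `T`, forces the centre of `g` to
be `O(1 / a)`-close to `T`. -/
lemma exists_eventually_abs_sub_profile_le (hη : TransitionProfile W η)
    (hw : WellBounds W m M c δ) (hn : 2 ≤ n) (hK : 0 < K) :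
    ∃ C > 0, ∀ᶠ a in atTop, ∀ g, RescaledSolution n W K a g → ∀ T,
      HasBallMass n a (fun t ↦ Vpot n W (η (t - T))) →
      ∀ t > 0, |g t - η (t - T)| ≤ C / a * exp (-(m / 8 * |t - a|)) := by
  have hm := hw.m_pos
  have hM := hw.M_pos
  obtain ⟨C₁, hC₁, hcenter⟩ := exists_eventually_exists_center hη hw hn hK
  obtain ⟨C₂, hC₂, hshift⟩ := hη.exists_abs_sub_center_le hw.toDoubleWell hn
    (show 0 < m / 8 by positivity)
  obtain ⟨C₃, hC₃, hradius⟩ := hη.exists_abs_sub_radius_le hw hn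
  set D := C₂ * (2 * M * C₁) with hD
  refine ⟨(M * exp (m / 2) * (1 + 4 / m) * D + C₁) * exp (m / 8 * (1 + C₃)), by positivity, ?_⟩
  filter_upwards [eventually_ge_atTop 4, hcenter, eventually_div_le D (b := 1 / 2) (by norm_num)]
    with a ha hcenter hsmall g hg T hT t ht
  obtain ⟨T', hT', hclose⟩ := hcenter g hg
  have hTT' : |T - T'| ≤ D / a := by
    have hDeq : D / a = C₂ * (2 * M * C₁ / a) := by rw [hD]; ring
    rw [hDeq] at hsmall ⊢
    refine hshift T' (by linarith) T a _ (by positivity) _ hg.hasBallMass hT (fun s hs ↦ ?_)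
      (by linarith)
    calc |Vpot n W (g s) - Vpot n W (η (s - T'))| ≤ 2 * M * |g s - η (s - T')| :=
          hw.abs_vpot_sub_vpot_le hn (hg.mem_Icc s) (hη.mem_Icc _)
      _ ≤ 2 * M * (C₁ / a * exp (-(m / 8 * |s - T'|))) := by gcongr; exact hclose s hs
      _ = 2 * M * C₁ / a * exp (-(m / 8 * |s - T'|)) := by ring
  obtain ⟨hTT'₁, hTT'₂⟩ := abs_le.1 (hTT'.trans hsmall)
  obtain ⟨hTa₁, hTa₂⟩ := abs_le.1 (hradius T (by linarith) a (by linarith) hT)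
  have hT'a : |T' - a| ≤ 1 + C₃ := abs_le.2 ⟨by linarith, by linarith⟩
  refine (hη.abs_sub_le_of_abs_sub_center_le hw hsmall hTT' hT'a (by positivity)
    (hclose t ht)).trans (le_of_eq ?_)
  ring

end RescaledSolution

/-! ### The Laplacian of a radial function -/

lemma fderiv_fderiv_apply_apply_eq_deriv_deriv {F : Type*} [NormedAddCommGroup F]
    [NormedSpace ℝ F] {v : F → ℝ} (hv : ContDiff ℝ 2 v) (x e : F) :
    fderiv ℝ (fun y ↦ fderiv ℝ v y e) x e = deriv (deriv fun s : ℝ ↦ v (x + s • e)) 0 := by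
  have hline {u : F → ℝ} (hu : Differentiable ℝ u) (s : ℝ) :
      deriv (fun s : ℝ ↦ u (x + s • e)) s = fderiv ℝ u (x + s • e) e := by
    have hpath : HasDerivAt (fun s : ℝ ↦ x + s • e) e s := by
      simpa using ((hasDerivAt_id s).smul_const e).const_add x
    exact ((hu _).hasFDerivAt.comp_hasDerivAt s hpath).deriv
  have hfderiv : ContDiff ℝ 1 (fderiv ℝ v) := hv.fderiv_right one_add_one_eq_two.le
  rw [funext (hline (hv.differentiable two_ne_zero)),
    hline ((hfderiv.differentiable one_ne_zero).clm_apply (differentiable_const e)),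
    zero_smul, add_zero]

lemma deriv_deriv_comp_sqrt_sq_add_sq {φ : ℝ → ℝ} (hφ : ContDiff ℝ 2 φ) {r : ℝ} (hr : 0 < r) :
    deriv (deriv fun s ↦ φ √(r ^ 2 + s ^ 2)) 0 = deriv φ r / r := by
  have hsqrt (s : ℝ) : HasDerivAt (fun s ↦ √(r ^ 2 + s ^ 2)) (s / √(r ^ 2 + s ^ 2)) s := by
    have hsq : HasDerivAt (fun s : ℝ ↦ r ^ 2 + s ^ 2) (2 * s) s := by
      simpa using (hasDerivAt_pow 2 s).const_add (r ^ 2)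
    refine (hsq.sqrt (by positivity)).congr_deriv ?_
    rw [mul_div_mul_left _ _ two_ne_zero]
  have hfirst : (deriv fun s ↦ φ √(r ^ 2 + s ^ 2)) =
      fun s ↦ s * (deriv φ √(r ^ 2 + s ^ 2) / √(r ^ 2 + s ^ 2)) := funext fun s ↦
    ((hφ.differentiable two_ne_zero _).hasDerivAt.comp s (hsqrt s)).deriv.trans (by ring)
  have hφ' : Differentiable ℝ (deriv φ) :=
    (ContDiff.deriv' (n := 1) (by simpa [one_add_one_eq_two] using hφ)).differentiable one_ne_zero
  have hquot : DifferentiableAt ℝ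
      (fun s ↦ deriv φ √(r ^ 2 + s ^ 2) / √(r ^ 2 + s ^ 2)) 0 :=
    ((hφ' _).comp 0 (hsqrt 0).differentiableAt).div (hsqrt 0).differentiableAt
      (Real.sqrt_pos.2 (by positivity)).ne'
  rw [hfirst, ((hasDerivAt_id' 0).fun_mul hquot.hasDerivAt).deriv]
  simp [Real.sqrt_sq hr.le]

lemma norm_smul_single_add_smul_single {n : ℕ} {i₀ i : Fin n} (hi : i ≠ i₀) (r s : ℝ) :
    ‖r • EuclideanSpace.single i₀ (1 : ℝ) + s • EuclideanSpace.single i (1 : ℝ)‖ =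
      √(r ^ 2 + s ^ 2) := by
  have horth : inner ℝ (r • EuclideanSpace.single i₀ (1 : ℝ))
      (s • EuclideanSpace.single i (1 : ℝ)) = 0 := by
    simp [inner_smul_left, inner_smul_right, EuclideanSpace.inner_single_left, hi.symm]
  rw [norm_add_eq_sqrt_iff_real_inner_eq_zero.2 horth]
  simp [norm_smul, sq]

lemma lap_eq_of_forall_eq_comp_norm {n : ℕ} {v : En n → ℝ} (hv : ContDiff ℝ 2 v) {φ : ℝ → ℝ}
    (hφ : ContDiff ℝ 2 φ) (hrad : ∀ x, v x = φ ‖x‖) (i₀ : Fin n) {r : ℝ} (hr : 0 < r) :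
    lap n v (r • EuclideanSpace.single i₀ 1) =
      deriv (deriv φ) r + ((n : ℝ) - 1) / r * deriv φ r := by
  have htangential (i : Fin n) (hi : i ≠ i₀) :
      deriv (deriv fun s : ℝ ↦ v (r • EuclideanSpace.single i₀ 1 + s • EuclideanSpace.single i 1))
        0 = deriv φ r / r := by
    simp only [hrad, norm_smul_single_add_smul_single hi]
    exact deriv_deriv_comp_sqrt_sq_add_sq hφ hr
  have hradial :
      deriv (deriv fun s : ℝ ↦ v (r • EuclideanSpace.single i₀ 1 + s • EuclideanSpace.single i₀ 1))
        0 = deriv (deriv φ) r := by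
    have heq : (fun s : ℝ ↦ v (r • EuclideanSpace.single i₀ 1 + s • EuclideanSpace.single i₀ 1))
        =ᶠ[nhds 0] fun s ↦ φ (r + s) := by
      filter_upwards [eventually_gt_nhds (neg_lt_zero.2 hr)] with s hs
      rw [hrad, ← add_smul, norm_smul, Real.norm_of_nonneg (by linarith)]
      simp
    rw [heq.deriv.deriv_eq, funext fun s ↦ deriv_comp_const_add φ r s, deriv_comp_const_add,
      add_zero]
  simp only [lap, fderiv_fderiv_apply_apply_eq_deriv_deriv hv]
  rw [← Finset.add_sum_erase _ _ (Finset.mem_univ i₀), hradial,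
    Finset.sum_congr rfl fun i hi ↦ htangential i (Finset.ne_of_mem_erase hi)]
  simp only [Finset.sum_const, Finset.card_erase_of_mem (Finset.mem_univ i₀), Finset.card_univ,
    Fintype.card_fin, nsmul_eq_mul, Nat.cast_pred i₀.pos]
  ring

namespace RadialDecreasing

variable {n : ℕ} {v : En n → ℝ}

lemma apply_norm_smul_single (hv : RadialDecreasing n v) (i₀ : Fin n) (x : En n) :
    v (‖x‖ • EuclideanSpace.single i₀ 1) = v x := by
  obtain ⟨ζ, -, hζ⟩ := hv
  simp [hζ, norm_smul]

lemma deriv_smul_single_zero (hv : RadialDecreasing n v) (i₀ : Fin n) :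
    deriv (fun r : ℝ ↦ v (r • EuclideanSpace.single i₀ 1)) 0 = 0 := by
  obtain ⟨ζ, -, hζ⟩ := hv
  have heven := deriv_comp_neg (fun r : ℝ ↦ v (r • EuclideanSpace.single i₀ 1)) 0
  simp only [hζ, neg_smul, norm_neg, neg_zero] at heven ⊢
  linarith

lemma deriv_smul_single_nonpos (hv : RadialDecreasing n v) (hdiff : Differentiable ℝ v)
    (i₀ : Fin n) {r : ℝ} (hr : 0 ≤ r) :
    deriv (fun r : ℝ ↦ v (r • EuclideanSpace.single i₀ 1)) r ≤ 0 := by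
  obtain ⟨ζ, hanti, hζ⟩ := hv
  have hslice : DifferentiableAt ℝ (fun r : ℝ ↦ v (r • EuclideanSpace.single i₀ 1)) r := by
    fun_prop
  have hantiSlice : AntitoneOn (fun r : ℝ ↦ v (r • EuclideanSpace.single i₀ 1)) (Ici 0) :=
    fun s hs t ht hst ↦ by
      simpa [hζ, norm_smul, abs_of_nonneg (mem_Ici.1 hs), abs_of_nonneg (mem_Ici.1 ht)] using
        hanti hs ht hst
  rw [← hslice.derivWithin (uniqueDiffOn_Ici 0 r hr)]
  exact hantiSlice.derivWithin_nonpos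

end RadialDecreasing

/-! ### Rescaling the equation -/

lemma deriv_deriv_comp_mul_left (c : ℝ) (φ : ℝ → ℝ) (t : ℝ) :
    deriv (deriv fun s ↦ φ (c * s)) t = c ^ 2 * deriv (deriv φ) (c * t) := by
  simp only [funext (deriv_comp_mul_left c φ), smul_eq_mul, deriv_const_mul_field',
    deriv_comp_mul_left c (deriv φ)]
  ring

lemma ApproxRadialSolution.of_pde {n : ℕ} {W : ℝ → ℝ} {K ε : ℝ} {v E : En n → ℝ} (i₀ : Fin n)
    (hε : 0 < ε) (hKε : K * ε ≤ 1) (hv : ContDiff ℝ 2 v) (hmem : ∀ x, v x ∈ Icc (0 : ℝ) 1)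
    (hrad : RadialDecreasing n v) (hE : ∀ x, |E x| ≤ K)
    (hpde : ∀ x, -2 * ε ^ 2 * lap n v x =
      ε * v x * (1 - v x) * E x - derivWithin W (Icc 0 1) (v x)) :
    ApproxRadialSolution (n - 1) W (K * ε) fun t ↦ v ((ε * t) • EuclideanSpace.single i₀ 1) := by
  let φ : ℝ → ℝ := fun r ↦ v (r • EuclideanSpace.single i₀ 1)
  have hφ : ContDiff ℝ 2 φ := hv.comp (contDiff_id.smul contDiff_const)
  have hderiv (t : ℝ) : deriv (fun t ↦ φ (ε * t)) t = ε * deriv φ (ε * t) :=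
    deriv_comp_mul_left ε φ t
  change ApproxRadialSolution (n - 1) W (K * ε) fun t ↦ φ (ε * t)
  refine ⟨sub_nonneg.2 (mod_cast i₀.pos), ⟨mul_nonneg ((abs_nonneg _).trans (hE 0)) hε.le, hKε⟩,
    hφ.comp (contDiff_const.mul contDiff_id), ?_, fun t ht ↦ ?_, fun t ↦ hmem _, fun t ht ↦ ?_⟩
  · rw [hderiv, mul_zero, hrad.deriv_smul_single_zero i₀, mul_zero]
  · rw [hderiv]
    exact mul_nonpos_of_nonneg_of_nonpos hε.le
      (hrad.deriv_smul_single_nonpos (hv.differentiable two_ne_zero) i₀ (by positivity))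
  · have hlap := lap_eq_of_forall_eq_comp_norm hv hφ
      (fun x ↦ (hrad.apply_norm_smul_single i₀ x).symm) i₀ (mul_pos hε ht)
    have herror : 2 * (ε ^ 2 * deriv (deriv φ) (ε * t) + (n - 1) / t * (ε * deriv φ (ε * t))) -
        derivWithin W (Icc 0 1) (φ (ε * t)) =
          -(E ((ε * t) • EuclideanSpace.single i₀ 1) * ε) * (φ (ε * t) * (1 - φ (ε * t))) := by
      have hradial := hpde ((ε * t) • EuclideanSpace.single i₀ 1)
      have hscale : (n - 1) / t * (ε * deriv φ (ε * t)) =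
          ε ^ 2 * ((n - 1) / (ε * t) * deriv φ (ε * t)) := by field_simp
      rw [hlap] at hradial
      rw [hscale]
      linear_combination -hradial
    have hnonneg : 0 ≤ φ (ε * t) * (1 - φ (ε * t)) := self_mul_one_sub_nonneg (hmem _)
    rw [deriv_deriv_comp_mul_left, hderiv, herror, abs_mul, abs_neg, abs_mul, abs_of_pos hε,
      abs_of_nonneg hnonneg]
    gcongr
    exact hE _

lemma RescaledSolution.exists_of_pde {n : ℕ} {W : ℝ → ℝ} {K ε : ℝ} {v E : En n → ℝ}
    (hn : n ≠ 0) (hε : 0 < ε) (hKε : K * ε ≤ 1) (hv : ContDiff ℝ 2 v)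
    (hmem : ∀ x, v x ∈ Icc (0 : ℝ) 1) (hrad : RadialDecreasing n v)
    (hmass : ∫ x : En n, Vpot n W (v x) = 1) (hE : ∀ x, |E x| ≤ K)
    (hpde : ∀ x, -2 * ε ^ 2 * lap n v x =
      ε * v x * (1 - v x) * E x - derivWithin W (Icc 0 1) (v x)) :
    ∃ g, RescaledSolution n W (K * R0 n) (R0 n / ε) g ∧ ∀ x, v x = g (‖x‖ / ε) := by
  let i₀ : Fin n := ⟨0, hn.bot_lt⟩
  let g : ℝ → ℝ := fun t ↦ v ((ε * t) • EuclideanSpace.single i₀ 1)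
  have hvg (x : En n) : v x = g (‖x‖ / ε) := by
    simp only [g, mul_div_cancel₀ _ hε.ne', hrad.apply_norm_smul_single]
  have herror : K * R0 n / (R0 n / ε) = K * ε := by
    rw [mul_div_assoc, div_div_cancel₀ (R0_pos n).ne']
  refine ⟨g, ⟨herror ▸ .of_pde i₀ hε hKε hv hmem hrad hE hpde, ?_⟩, hvg⟩
  exact hasBallMass_of_integral_eq_one hn hε (by simpa only [hvg] using hmass)

lemma const_mul_exp_neg_le {A B b : ℝ} (hA : 0 ≤ A) (hAB : A ≤ B) (hbB : 1 / B ≤ b) (s : ℝ) :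
    A * exp (-(b * |s|)) ≤ B * exp (-|s| / B) := by
  have hrate : -(b * |s|) ≤ -|s| / B := by
    calc -(b * |s|) ≤ -(1 / B * |s|) := by gcongr
      _ = -|s| / B := by ring
  exact mul_le_mul hAB (exp_le_exp.2 hrate) (exp_pos _).le (hA.trans hAB)

lemma RescaledSolution.exists_eventually_nhdsGT_zero_abs_sub_profile_le {n : ℕ} (hn : 2 ≤ n)
    {W η : ℝ → ℝ} (hW : DoubleWell W) (hη : TransitionProfile W η) {K : ℝ} (hK : 0 < K) :
    ∃ C > 0, ∀ᶠ ε in nhdsWithin 0 (Ioi 0), ∀ g, RescaledSolution n W K (R0 n / ε) g →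
      ∀ T, HasBallMass n (R0 n / ε) (fun t ↦ Vpot n W (η (t - T))) →
      ∀ t > 0, |g t - η (t - T)| ≤ C * ε * exp (-|t - R0 n / ε| / C) := by
  obtain ⟨m, M, c, δ, hw⟩ := hW.exists_wellBounds hη
  have hm := hw.m_pos
  have hR := R0_pos n
  obtain ⟨C, hC, hclose⟩ := exists_eventually_abs_sub_profile_le hη hw hn hK
  have hlarge : Tendsto (fun ε ↦ R0 n / ε) (nhdsWithin 0 (Ioi 0)) atTop :=
    tendsto_inv_nhdsGT_zero.const_mul_atTop hR
  refine ⟨C / R0 n + 8 / m, by positivity, ?_⟩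
  filter_upwards [hlarge.eventually hclose, self_mem_nhdsWithin] with ε hclose hε g hg T hT t ht
  have hrate : 1 / (C / R0 n + 8 / m) ≤ m / 8 := by
    rw [one_div, ← inv_div 8 m]
    gcongr
    exact le_add_of_nonneg_left (by positivity)
  calc |g t - η (t - T)|
      ≤ C / (R0 n / ε) * exp (-(m / 8 * |t - R0 n / ε|)) :=
        hclose g hg T hT t ht
    _ = ε * (C / R0 n * exp (-(m / 8 * |t - R0 n / ε|))) := by field_simp
    _ ≤ ε * ((C / R0 n + 8 / m) * exp (-|t - R0 n / ε| / (C / R0 n + 8 / m))) := by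
        refine mul_le_mul_of_nonneg_left ?_ (mem_Ioi.1 hε).le
        exact const_mul_exp_neg_le (by positivity) (le_add_of_nonneg_right (by positivity)) hrate _
    _ = _ := by ring

theorem statement8_general (n : ℕ) (hn : 2 ≤ n) (W : ℝ → ℝ) (hW : DoubleWell W)
    (η : ℝ → ℝ) (hη : TransitionProfile W η) (K : ℝ) (hK : 0 < K) :
    ∃ ε₁ > (0 : ℝ), ∃ C > (0 : ℝ), ∀ ε : ℝ, 0 < ε → ε < ε₁ →
      ∀ v : En n → ℝ, ContDiff ℝ 2 v → (∀ x, v x ∈ Icc (0 : ℝ) 1) →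
        RadialDecreasing n v → (∫ x : En n, Vpot n W (v x)) = 1 →
      ∀ E : En n → ℝ, (∀ x, |E x| ≤ K) →
        (∀ x : En n, -2 * ε ^ 2 * lap n v x
            = ε * v x * (1 - v x) * E x - derivWithin W (Icc 0 1) (v x)) →
      ∀ τ : ℝ, (∫ x : En n, Vpot n W (η ((‖x‖ - R0 n) / ε - τ))) = 1 →
        ∃ f : ℝ → ℝ, ContDiffOn ℝ 2 f (Ioi (-(R0 n) / ε)) ∧
          (∀ x : En n, v x = η ((‖x‖ - R0 n) / ε - τ) + f ((‖x‖ - R0 n) / ε)) ∧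
          ∀ s : ℝ, -(R0 n) / ε < s → |f s| ≤ C * ε * Real.exp (-|s| / C) := by
  obtain ⟨C, hC, hclose⟩ := RescaledSolution.exists_eventually_nhdsGT_zero_abs_sub_profile_le
    hn hW hη (mul_pos hK (R0_pos n))
  have hsmall : ∀ᶠ ε in nhdsWithin 0 (Ioi 0), ε ≤ 1 / K :=
    eventually_nhdsWithin_of_eventually_nhds (eventually_le_nhds (by positivity))
  obtain ⟨ε₁, hε₁, hε₁_spec⟩ := (nhdsGT_basis (0 : ℝ)).eventually_iff.1 (hclose.and hsmall)
  refine ⟨ε₁, hε₁, C, hC, fun ε hε hlt v hv hmem hrad hmass E hE hpde τ hτ ↦ ?_⟩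
  obtain ⟨hclose, hle⟩ := hε₁_spec ⟨hε, hlt⟩
  have hn₀ : n ≠ 0 := by omega
  obtain ⟨g, hg, hvg⟩ := RescaledSolution.exists_of_pde hn₀ hε ((le_div_iff₀' hK).1 hle)
    hv hmem hrad hmass hE hpde
  have hηmass : HasBallMass n (R0 n / ε) fun t ↦ Vpot n W (η (t - (R0 n / ε + τ))) :=
    hasBallMass_of_integral_eq_one hn₀ hε (by simpa only [← sub_sub, ← sub_div] using hτ)
  refine ⟨fun s ↦ g (s + R0 n / ε) - η (s - τ), ?_, fun x ↦ ?_, fun s hs ↦ ?_⟩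
  · exact ((hg.contDiff.comp (contDiff_id.add contDiff_const)).sub
      ((hη.contDiff hW).comp (contDiff_id.sub contDiff_const))).contDiffOn
  · simp only [hvg, ← add_div, sub_add_cancel, add_sub_cancel]
  · have hpos : 0 < s + R0 n / ε := by linarith [neg_div ε (R0 n)]
    simpa only [add_comm (R0 n / ε) τ, add_sub_add_right_eq_sub, add_sub_cancel_right] using
      hclose g hg _ hηmass _ hpos

theorem statement8 (n : ℕ) (hn : 2 ≤ n) (W : ℝ → ℝ) (hW : DoubleWell W)
    (η : ℝ → ℝ) (hη : TransitionProfile W η) :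
    ∃ ℓ₀ > (0:ℝ), ∀ K > (0:ℝ), ∃ ε₁ > (0:ℝ), ∃ C > (0:ℝ),
      ∀ ε : ℝ, 0 < ε → ε < ε₁ →
      ∀ v : En n → ℝ, ContDiff ℝ 2 v → (∀ x, v x ∈ Icc (0:ℝ) 1) →
        RadialDecreasing n v → (∫ x : En n, Vpot n W (v x)) = 1 →
        AC n W ε v ≤ 2 * (n : ℝ) * ballVol n ^ ((1 : ℝ) / (n : ℝ)) + ℓ₀ →
      ∀ E : En n → ℝ, Continuous E → Radial n E → (∀ x, |E x| ≤ K) →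
        (∀ x : En n, -2 * ε ^ 2 * lap n v x
            = ε * v x * (1 - v x) * E x - derivWithin W (Icc 0 1) (v x)) →
      ∀ τ : ℝ, (∫ x : En n, Vpot n W (η ((‖x‖ - R0 n) / ε - τ))) = 1 →
        ∃ f : ℝ → ℝ, ContDiffOn ℝ 2 f (Ioi (-(R0 n) / ε)) ∧
          (∀ x : En n, v x = η ((‖x‖ - R0 n) / ε - τ) + f ((‖x‖ - R0 n) / ε)) ∧
          ∀ s : ℝ, -(R0 n) / ε < s → |f s| ≤ C * ε * Real.exp (-|s| / C) := by
  refine ⟨1, one_pos, fun K hK ↦ ?_⟩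
  obtain ⟨ε₁, hε₁, C, hC, hmain⟩ := statement8_general n hn W hW η hη K hK
  exact ⟨ε₁, hε₁, C, hC, fun ε hε hlt v hv hmem hrad hmass _ E _ _ ↦
    hmain ε hε hlt v hv hmem hrad hmass E⟩
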